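/- Let K ≥ 1 be an integer, P a real n×n̄ matrix, and for each k ≤ K let f_k ≥ 1 and S^{k1},…,S^{k n̄} be symmetric f_k×f_k matrices defining S_k[z] = ∑_i z_i S^{ki}, such that z = 0 whenever S_k[z] = 0 for all k; let 𝒯 ⊆ ℝ_{≥0}^K be a nonempty convex compact monotone set containing a point with all coordinates positive. Let A be a symmetric n×n matrix, b ∈ ℝ^n, s > 0, and set Q = PᵀAP, q = Pᵀb, Q_+ = [[Q, q],[qᵀ, 0]]. Then Opt[s] ≤ Opt_*[κ·s] with κ = 2·ln(8·(f_1+⋯+f_K)), where Opt[s] = inf{ s·φ_𝒯(λ[Λ]) + μ : Λ_k ∈ S^{f_k} positive semidefinite, μ ≥ 0, Q_+ ⪯ BlockDiag(∑_k 𝒮_k^*[Λ_k], μ) } and Opt_*[s'] = sup{ xᵀAx + 2bᵀx : x ∈ 𝒳[s'] }. -/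

import Mathlib

/-!
Conic duality turns a lower bound for the relaxation into a positive semidefinite matrix `Y`. Split
`Y` into rank-one terms that are orthogonal for the form `Q_+`: then every signed sum of the vectors
gives the form the same value, namely `Tr(Q_+ Y)`, and it remains to find signs for which the sum is
(up to its last coordinate) a point of the spectratope. For random signs, a matrix Khintchine
inequality, obtained by bounding the trace moments with a mean value inequality, shows that the
constraints `S_k[z]² ⪯ κ s t_k` all hold with probability at least `3/4`, while the last coordinate
`w` satisfies `|w| ≤ 1` with probability at least `5/18 > 1/4`. Finally `|w| ≤ 1` is as good as
`w = 1`, because the spectratope is symmetric about the origin.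
-/


open Matrix BigOperators

noncomputable section

/-- The spectratope `𝒳[s]`: image under `z ↦ P z` of the set of `z` such that
`S_k[z]² ⪯ s t_k I` for some `t ∈ 𝒯`, where `S_k[z] = ∑ i z_i S^{ki}`. -/
def spectratope {n nb K : ℕ} (f : Fin K → ℕ) (P : Matrix (Fin n) (Fin nb) ℝ)
    (Smat : (k : Fin K) → Fin nb → Matrix (Fin (f k)) (Fin (f k)) ℝ)
    (T : Set (Fin K → ℝ)) (s : ℝ) : Set (Fin n → ℝ) :=
  {x | ∃ z : Fin nb → ℝ, ∃ t ∈ T, x = P *ᵥ z ∧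
    ∀ k, ((s * t k) • (1 : Matrix (Fin (f k)) (Fin (f k)) ℝ)
            - (∑ i, z i • Smat k i) ^ 2).PosSemidef}

/-- Support function `φ_𝒯(λ) = max_{t ∈ 𝒯} λᵀ t`. -/
def suppFn {K : ℕ} (T : Set (Fin K → ℝ)) (lam : Fin K → ℝ) : ℝ :=
  sSup ((fun t => ∑ k, lam k * t k) '' T)

/-- `𝒮_k^*[Λ]`, the matrix with entries `Tr(Λ (S^{ki} S^{kj} + S^{kj} S^{ki})/2)`. -/
def calSstar {nb fk : ℕ} (Sm : Fin nb → Matrix (Fin fk) (Fin fk) ℝ)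
    (Λ : Matrix (Fin fk) (Fin fk) ℝ) : Matrix (Fin nb) (Fin nb) ℝ :=
  Matrix.of fun i j => (Λ * ((1 / 2 : ℝ) • (Sm i * Sm j + Sm j * Sm i))).trace

/-- `λ[Λ] = (Tr Λ_1, …, Tr Λ_K)`. -/
def lamOf {K : ℕ} {f : Fin K → ℕ}
    (Λ : (k : Fin K) → Matrix (Fin (f k)) (Fin (f k)) ℝ) : Fin K → ℝ :=
  fun k => (Λ k).trace

/-- `Q_+ = [[Q, q],[qᵀ, 0]]`. -/
def qPlus {m : ℕ} (Q : Matrix (Fin m) (Fin m) ℝ) (q : Fin m → ℝ) :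
    Matrix (Fin m ⊕ Unit) (Fin m ⊕ Unit) ℝ :=
  Matrix.fromBlocks Q (Matrix.of fun i _ => q i) (Matrix.of fun _ j => q j) 0

/-- `BlockDiag(M, μ)`. -/
def blockDiagOne {m : ℕ} (M : Matrix (Fin m) (Fin m) ℝ) (μ : ℝ) :
    Matrix (Fin m ⊕ Unit) (Fin m ⊕ Unit) ℝ :=
  Matrix.fromBlocks M 0 0 (Matrix.of fun _ _ => μ)

section Spectral

variable {κ : Type*} [Fintype κ] {A B : Matrix κ κ ℝ}

theorem trace_mul_vecMulVec_self (M : Matrix κ κ ℝ) (v : κ → ℝ) :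
    (M * vecMulVec v v).trace = v ⬝ᵥ M *ᵥ v := by
  rw [mul_vecMulVec, trace_vecMulVec, dotProduct_comm]

theorem posSemidef_trace_mul_nonneg (hA : A.PosSemidef) (hB : B.PosSemidef) :
    0 ≤ (A * B).trace := by
  obtain ⟨m, v, rfl⟩ := posSemidef_iff_eq_sum_vecMulVec.mp hB
  simp only [star_trivial, Matrix.mul_sum, trace_sum, trace_mul_vecMulVec_self]
  exact Finset.sum_nonneg fun i _ => hA.dotProduct_mulVec_nonneg (v i)

variable [DecidableEq κ]

theorem trace_mul_le_of_posSemidef_smul_one_sub {c : ℝ} (hA : A.PosSemidef)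
    (hB : (c • 1 - B).PosSemidef) : (A * B).trace ≤ c * A.trace := by
  have h := posSemidef_trace_mul_nonneg hA hB
  rwa [Matrix.mul_sub, trace_sub, Matrix.mul_smul, Matrix.mul_one, trace_smul, smul_eq_mul,
    sub_nonneg] at h

theorem isHermitian_pow_eq_conj_diagonal (hA : A.IsHermitian) (m : ℕ) :
    A ^ m = (hA.eigenvectorUnitary : Matrix κ κ ℝ) * diagonal (hA.eigenvalues ^ m)
      * star (hA.eigenvectorUnitary : Matrix κ κ ℝ) := by
  conv_lhs => rw [hA.spectral_theorem]
  rw [← map_pow, diagonal_pow, Unitary.conjStarAlgAut_apply]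
  rfl

theorem isHermitian_posSemidef_pow_of_even (hA : A.IsHermitian) {m : ℕ} (hm : Even m) :
    (A ^ m).PosSemidef := by
  obtain ⟨r, rfl⟩ := hm
  have hr := posSemidef_conjTranspose_mul_self (A ^ r)
  rwa [(hA.pow r).eq, ← pow_add] at hr

theorem isHermitian_posSemidef_smul_one_sub_pow (hA : A.IsHermitian) {m : ℕ} {c : ℝ}
    (h : ∀ j, hA.eigenvalues j ^ m ≤ c) : (c • 1 - A ^ m).PosSemidef := by
  have hdiag : c • 1 - A ^ m = (hA.eigenvectorUnitary : Matrix κ κ ℝ)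
      * diagonal (fun j => c - hA.eigenvalues j ^ m)
      * star (hA.eigenvectorUnitary : Matrix κ κ ℝ) := by
    have hd : diagonal (fun j => c - hA.eigenvalues j ^ m)
        = c • 1 - diagonal (hA.eigenvalues ^ m) := by
      rw [smul_one_eq_diagonal, diagonal_sub]; rfl
    rw [hd, mul_sub, sub_mul, ← isHermitian_pow_eq_conj_diagonal, mul_smul_comm, mul_one,
      smul_mul_assoc, Unitary.mul_star_self_of_mem hA.eigenvectorUnitary.2]
  rw [hdiag]
  exact (PosSemidef.diagonal fun j => sub_nonneg.mpr (h j)).mul_mul_conjTranspose_same _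

/-- The matrix `(w a b)` consists of the squared inner products of the eigenvectors of `A` and
`B`. -/
theorem exists_trace_pow_mul_pow_eq_sum (hA : A.IsHermitian) (hB : B.IsHermitian) :
    ∃ w : κ → κ → ℝ, (∀ a b, 0 ≤ w a b) ∧ ∀ i j : ℕ, (A ^ i * B ^ j).trace
      = ∑ a, ∑ b, w a b * (hA.eigenvalues a ^ i * hB.eigenvalues b ^ j) := by
  set U := (hA.eigenvectorUnitary : Matrix κ κ ℝ)
  set W := (hB.eigenvectorUnitary : Matrix κ κ ℝ)
  refine ⟨fun a b => (star U * W) a b ^ 2, fun a b => sq_nonneg _, fun i j => ?_⟩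
  have hcyc : (A ^ i * B ^ j).trace = (diagonal (hA.eigenvalues ^ i) * (star U * W)
      * diagonal (hB.eigenvalues ^ j) * star (star U * W)).trace := by
    rw [isHermitian_pow_eq_conj_diagonal hA, isHermitian_pow_eq_conj_diagonal hB, star_mul,
      star_star]
    simp only [Matrix.mul_assoc]
    rw [trace_mul_comm U]
    simp only [Matrix.mul_assoc, U, W]
  rw [hcyc, trace]
  refine Finset.sum_congr rfl fun a _ => ?_
  rw [diag_apply, Matrix.mul_apply]
  refine Finset.sum_congr rfl fun b _ => ?_
  rw [mul_diagonal, diagonal_mul, star_apply (star U * W), star_trivial ((star U * W) a b),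
    Pi.pow_apply, Pi.pow_apply]
  ring

theorem isHermitian_trace_pow_eq_sum (hA : A.IsHermitian) (m : ℕ) :
    (A ^ m).trace = ∑ j, hA.eigenvalues j ^ m := by
  rw [isHermitian_pow_eq_conj_diagonal hA, trace_mul_cycle, Unitary.coe_star_mul_self, one_mul,
    trace_diagonal]
  rfl

end Spectral

section MeanValue

theorem pow_mul_pow_add_pow_mul_pow_le {m j : ℕ} (hm : Even m) (hj : j ≤ m) (x y : ℝ) :
    x ^ j * y ^ (m - j) + x ^ (m - j) * y ^ j ≤ x ^ m + y ^ m := by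
  have habs : ∀ i k : ℕ, x ^ i * y ^ k ≤ |x| ^ i * |y| ^ k := fun i k => by
    rw [← abs_pow, ← abs_pow, ← abs_mul]
    exact le_abs_self _
  have hmono : 0 ≤ (|x| ^ j - |y| ^ j) * (|x| ^ (m - j) - |y| ^ (m - j)) := by
    rcases le_total |x| |y| with h | h
    · exact mul_nonneg_of_nonpos_of_nonpos
        (sub_nonpos.mpr (pow_le_pow_left₀ (abs_nonneg _) h _))
        (sub_nonpos.mpr (pow_le_pow_left₀ (abs_nonneg _) h _))
    · exact mul_nonneg (sub_nonneg.mpr (pow_le_pow_left₀ (abs_nonneg _) h _))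
        (sub_nonneg.mpr (pow_le_pow_left₀ (abs_nonneg _) h _))
  have hsplit : ∀ u : ℝ, |u| ^ j * |u| ^ (m - j) = u ^ m := fun u => by
    rw [← pow_add, Nat.add_sub_cancel' hj, hm.pow_abs]
  linarith [habs j (m - j), habs (m - j) j, hsplit x, hsplit y]

theorem sum_pow_mul_pow_le {m : ℕ} (hm : Even m) (x y : ℝ) :
    ∑ j ∈ Finset.range (m + 1), x ^ j * y ^ (m - j) ≤ (m + 1) / 2 * (x ^ m + y ^ m) := by
  have hreflect : ∑ j ∈ Finset.range (m + 1), x ^ (m - j) * y ^ j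
      = ∑ j ∈ Finset.range (m + 1), x ^ j * y ^ (m - j) := by
    rw [← Finset.sum_range_reflect]
    refine Finset.sum_congr rfl fun j hj => ?_
    simp only [Nat.add_sub_cancel, Nat.sub_sub_self (Finset.mem_range_succ_iff.mp hj)]
  have hsum := Finset.sum_le_sum fun j (hj : j ∈ Finset.range (m + 1)) =>
    pow_mul_pow_add_pow_mul_pow_le hm (Finset.mem_range_succ_iff.mp hj) x y
  rw [Finset.sum_add_distrib, hreflect, Finset.sum_const, Finset.card_range, nsmul_eq_mul] at hsum
  push_cast at hsum
  linarith

theorem sub_mul_pow_sub_pow_le {m : ℕ} (hm : Even m) (x y : ℝ) :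
    (x - y) * (x ^ (m + 1) - y ^ (m + 1)) ≤ (m + 1) / 2 * ((x - y) ^ 2 * (x ^ m + y ^ m)) :=
  calc (x - y) * (x ^ (m + 1) - y ^ (m + 1))
      = (x - y) ^ 2 * ∑ j ∈ Finset.range (m + 1), x ^ j * y ^ (m - j) := by
        rw [← geom_sum₂_mul, Nat.add_sub_cancel]
        ring
    _ ≤ (x - y) ^ 2 * ((m + 1) / 2 * (x ^ m + y ^ m)) :=
        mul_le_mul_of_nonneg_left (sum_pow_mul_pow_le hm x y) (sq_nonneg _)
    _ = (m + 1) / 2 * ((x - y) ^ 2 * (x ^ m + y ^ m)) := by ring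

variable {κ : Type*} [Fintype κ] [DecidableEq κ]

theorem trace_sub_mul_pow_sub_pow (A B : Matrix κ κ ℝ) (m : ℕ) :
    ((A - B) * (A ^ (m + 1) - B ^ (m + 1))).trace = (A ^ (m + 2) * B ^ 0).trace
      - (A ^ 1 * B ^ (m + 1)).trace - (A ^ (m + 1) * B ^ 1).trace
      + (A ^ 0 * B ^ (m + 2)).trace := by
  rw [trace_mul_comm (A ^ (m + 1)) (B ^ 1)]
  simp only [sub_mul, mul_sub, trace_sub, pow_zero, mul_one, one_mul, pow_one, ← pow_succ']
  ring

theorem trace_sub_sq_mul_pow_add_pow (A B : Matrix κ κ ℝ) (m : ℕ) :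
    ((A - B) ^ 2 * (A ^ m + B ^ m)).trace = (A ^ (m + 2) * B ^ 0).trace + (A ^ 2 * B ^ m).trace
      - 2 * (A ^ (m + 1) * B ^ 1).trace - 2 * (A ^ 1 * B ^ (m + 1)).trace
      + (A ^ m * B ^ 2).trace + (A ^ 0 * B ^ (m + 2)).trace := by
  have hABA : (A * B * A ^ m).trace = (A ^ (m + 1) * B ^ 1).trace := by
    rw [trace_mul_comm, ← Matrix.mul_assoc, ← pow_succ, pow_one]
  have hBAB : (B * A * B ^ m).trace = (A ^ 1 * B ^ (m + 1)).trace := by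
    rw [Matrix.mul_assoc, trace_mul_comm, Matrix.mul_assoc, ← pow_succ, pow_one]
  have hBAA : (B * A * A ^ m).trace = (A ^ (m + 1) * B ^ 1).trace := by
    rw [Matrix.mul_assoc, ← pow_succ', trace_mul_comm, pow_one]
  have hABB : (A * B * B ^ m).trace = (A ^ 1 * B ^ (m + 1)).trace := by
    rw [Matrix.mul_assoc, ← pow_succ', pow_one]
  rw [trace_mul_comm (A ^ m) (B ^ 2), pow_zero, pow_zero, mul_one, one_mul, add_comm m 2,
    pow_add A 2 m, pow_add B 2 m]
  simp only [sq, sub_mul, mul_sub, mul_add, trace_sub, trace_add, hABA, hBAB, hBAA, hABB]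
  ring

theorem isHermitian_trace_sub_mul_pow_sub_pow_le {A B : Matrix κ κ ℝ} (hA : A.IsHermitian)
    (hB : B.IsHermitian) {m : ℕ} (hm : Even m) :
    ((A - B) * (A ^ (m + 1) - B ^ (m + 1))).trace
      ≤ (m + 1) / 2 * ((A - B) ^ 2 * (A ^ m + B ^ m)).trace := by
  obtain ⟨w, hw, htr⟩ := exists_trace_pow_mul_pow_eq_sum hA hB
  set x := hA.eigenvalues
  set y := hB.eigenvalues
  calc ((A - B) * (A ^ (m + 1) - B ^ (m + 1))).trace
      = ∑ a, ∑ b, w a b * ((x a - y b) * (x a ^ (m + 1) - y b ^ (m + 1))) := by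
        simp only [trace_sub_mul_pow_sub_pow, htr, ← Finset.sum_sub_distrib,
          ← Finset.sum_add_distrib]
        exact Finset.sum_congr rfl fun a _ => Finset.sum_congr rfl fun b _ => by ring
    _ ≤ ∑ a, ∑ b, w a b * ((m + 1) / 2 * ((x a - y b) ^ 2 * (x a ^ m + y b ^ m))) :=
        Finset.sum_le_sum fun a _ => Finset.sum_le_sum fun b _ =>
          mul_le_mul_of_nonneg_left (sub_mul_pow_sub_pow_le hm _ _) (hw a b)
    _ = (m + 1) / 2 * ((A - B) ^ 2 * (A ^ m + B ^ m)).trace := by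
        simp only [trace_sub_sq_mul_pow_add_pow, htr, Finset.mul_sum, ← Finset.sum_sub_distrib,
          ← Finset.sum_add_distrib]
        exact Finset.sum_congr rfl fun a _ => Finset.sum_congr rfl fun b _ => by ring

end MeanValue

section UniformProb

/-- The probability of the event `E` under the uniform distribution on the finite type `Ω`. -/
def uniformProb {Ω : Type*} [Fintype Ω] (E : Set Ω) : ℝ :=
  𝔼 ω, E.indicator 1 ω

variable {Ω Ω' : Type*} [Fintype Ω] [Fintype Ω']

theorem mul_uniformProb_le_expect {E : Set Ω} {g : Ω → ℝ} {c : ℝ} (hg : ∀ ω, 0 ≤ g ω)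
    (hc : ∀ ω ∈ E, c ≤ g ω) : c * uniformProb E ≤ 𝔼 ω, g ω := by
  rw [uniformProb, Finset.mul_expect]
  refine Finset.expect_le_expect fun ω _ => ?_
  by_cases hω : ω ∈ E
  · simpa [hω] using hc ω hω
  · simpa [hω] using hg ω

theorem uniformProb_iUnion_le {I : Type*} [Fintype I] (E : I → Set Ω) :
    uniformProb (⋃ k, E k) ≤ ∑ k, uniformProb (E k) := by
  unfold uniformProb
  rw [← Finset.expect_sum_comm]
  have hnonneg : ∀ k ω, 0 ≤ (E k).indicator (1 : Ω → ℝ) ω :=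
    fun k => Set.indicator_nonneg fun _ _ => zero_le_one
  refine Finset.expect_le_expect fun ω _ => Set.indicator_apply_le' (fun hω => ?_) fun _ =>
    Finset.sum_nonneg fun k _ => hnonneg k ω
  obtain ⟨k, hk⟩ := Set.mem_iUnion.mp hω
  calc (1 : ℝ) = (E k).indicator 1 ω := (Set.indicator_of_mem hk 1).symm
    _ ≤ ∑ k, (E k).indicator 1 ω :=
        Finset.single_le_sum (fun k _ => hnonneg k ω) (Finset.mem_univ k)

theorem uniformProb_union_le (E F : Set Ω) :
    uniformProb (E ∪ F) ≤ uniformProb E + uniformProb F := by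
  rw [Set.union_eq_iUnion]
  exact (uniformProb_iUnion_le _).trans_eq (by rw [Fintype.sum_bool]; rfl)

theorem uniformProb_mono {E F : Set Ω} (h : E ⊆ F) : uniformProb E ≤ uniformProb F :=
  Finset.expect_le_expect fun ω _ =>
    Set.indicator_le_indicator_of_subset h (fun _ => zero_le_one) ω

theorem uniformProb_univ [Nonempty Ω] : uniformProb (Set.univ : Set Ω) = 1 := by
  simp [uniformProb]

theorem uniformProb_preimage_equiv (e : Ω ≃ Ω') (E : Set Ω') :
    uniformProb (e ⁻¹' E) = uniformProb E :=
  Fintype.expect_equiv e _ _ fun _ => rfl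

end UniformProb

section SignedSum

/-- The sum `∑ i, ε i • b i` of the family `b` with signs `ε`; it is a Rademacher sum when `ε` is
uniformly distributed. -/
def signedSum {ι M : Type*} [Fintype ι] [AddCommGroup M] (b : ι → M) (ε : ι → ℤˣ) : M :=
  ∑ i, ε i • b i

variable {ι M : Type*} [Fintype ι] [AddCommGroup M]

theorem map_signedSum {N F : Type*} [AddCommGroup N] [FunLike F M N] [AddMonoidHomClass F M N]
    (φ : F) (b : ι → M) (ε : ι → ℤˣ) :
    φ (signedSum b ε) = signedSum (fun i => φ (b i)) ε := by
  simp only [signedSum, map_sum, Units.smul_def, map_zsmul]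

theorem signedSum_neg (b : ι → M) (ε : ι → ℤˣ) : signedSum b (-ε) = -signedSum b ε := by
  simp only [signedSum, Pi.neg_apply, Units.neg_smul, Finset.sum_neg_distrib]

theorem signedSum_insertNth {N : ℕ} (b : Fin (N + 1) → M) (i : Fin (N + 1)) (u : ℤˣ)
    (ε : Fin N → ℤˣ) :
    signedSum b (i.insertNth u ε) = u • b i + signedSum (b ∘ i.succAbove) ε := by
  simp only [signedSum, Fin.sum_univ_succAbove _ i, Fin.insertNth_apply_same,
    Fin.insertNth_apply_succAbove, Function.comp_apply]

theorem signedSum_sub_signedSum_mulSingle_mul [DecidableEq ι] (b : ι → M) (i : ι) (ε : ι → ℤˣ) :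
    signedSum b ε - signedSum b ((Pi.mulSingle i (-1) : ι → ℤˣ) * ε) = (2 : ℤ) • ε i • b i := by
  rw [signedSum, signedSum, ← Finset.sum_sub_distrib, Fintype.sum_eq_single i]
  · rw [Pi.mul_apply, Pi.mulSingle_eq_same, neg_one_mul, Units.neg_smul, sub_neg_eq_add, two_smul]
  · intro j hj
    rw [Pi.mul_apply, Pi.mulSingle_eq_of_ne hj, one_mul, sub_self]

theorem isHermitian_signedSum {κ : Type*} {B : ι → Matrix κ κ ℝ} (hB : ∀ i, (B i).IsHermitian)
    (ε : ι → ℤˣ) : (signedSum B ε).IsHermitian := by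
  have h := map_signedSum (transposeAddEquiv κ κ ℝ) B ε
  simp only [transposeAddEquiv_apply] at h
  rw [IsHermitian, conjTranspose_eq_transpose_of_trivial, h]
  congr 1
  exact funext fun i => by rw [← conjTranspose_eq_transpose_of_trivial, (hB i).eq]

theorem expect_insertNth {N : ℕ} (i : Fin (N + 1)) (g : (Fin (N + 1) → ℤˣ) → ℝ) :
    𝔼 ε, g ε = (𝔼 ε : Fin N → ℤˣ, g (i.insertNth 1 ε) + 𝔼 ε, g (i.insertNth (-1) ε)) / 2 := by
  have hequiv := Fintype.expect_equiv (Fin.insertNthEquiv (fun _ => ℤˣ) i)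
    (fun p => g (i.insertNth p.1 p.2)) g fun _ => rfl
  rw [← hequiv, ← Finset.univ_product_univ, Finset.expect_product,
    Fintype.expect_eq_sum_div_card, Fintype.card_units_int, UnitsInt.univ,
    Finset.sum_pair (by decide), Nat.cast_two]

end SignedSum

section Khintchine

variable {ι κ : Type*} [Fintype ι] [DecidableEq ι] [Fintype κ] [DecidableEq κ]
  {B : ι → Matrix κ κ ℝ}

/-- Averaging over the `i`-th sign turns the left-hand side into a difference of powers, to which
the mean value inequality for traces applies. -/
theorem expect_trace_smul_mul_signedSum_pow_le (hB : ∀ i, (B i).IsHermitian) (i : ι) {m : ℕ}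
    (hm : Even m) :
    𝔼 ε : ι → ℤˣ, (ε i • B i * signedSum B ε ^ (m + 1)).trace
      ≤ (m + 1) * 𝔼 ε, (B i ^ 2 * signedSum B ε ^ m).trace := by
  set flip : (ι → ℤˣ) ≃ (ι → ℤˣ) := Equiv.mulLeft (Pi.mulSingle i (-1)) with hflip
  set F : (ι → ℤˣ) → ℝ := fun ε => (ε i • B i * signedSum B ε ^ (m + 1)).trace with hF
  set G : (ι → ℤˣ) → ℝ := fun ε => (B i ^ 2 * signedSum B ε ^ m).trace with hG
  have hpair : ∀ ε, F ε + F (flip ε) ≤ (m + 1) * (G ε + G (flip ε)) := fun ε => by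
    have hmean := isHermitian_trace_sub_mul_pow_sub_pow_le (isHermitian_signedSum hB ε)
      (isHermitian_signedSum hB (flip ε)) hm
    have hdiff : signedSum B ε - signedSum B (flip ε) = (2 : ℝ) • ε i • B i := by
      rw [two_smul, ← two_zsmul]
      exact signedSum_sub_signedSum_mulSingle_mul B i ε
    have hsq : ((2 : ℝ) • ε i • B i) ^ 2 = (4 : ℝ) • B i ^ 2 := by
      rw [smul_pow, smul_pow, Int.units_sq, one_smul]
      norm_num
    have hflip_i : flip ε i = -ε i := by simp [hflip]
    simp only [hdiff, hsq, smul_mul_assoc, mul_sub, mul_add, trace_smul, trace_sub, trace_add,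
      smul_eq_mul] at hmean
    simp only [hF, hG, hflip_i, Units.neg_smul, smul_mul_assoc, trace_smul]
    linarith
  have hFflip : 𝔼 ε, F (flip ε) = 𝔼 ε, F ε := Fintype.expect_equiv flip _ _ fun _ => rfl
  have hGflip : 𝔼 ε, G (flip ε) = 𝔼 ε, G ε := Fintype.expect_equiv flip _ _ fun _ => rfl
  have havg := Finset.expect_le_expect fun ε (_ : ε ∈ Finset.univ) => hpair ε
  rw [← Finset.mul_expect, Finset.expect_add_distrib, Finset.expect_add_distrib, hFflip,
    hGflip] at havg
  linarith

theorem expect_trace_signedSum_pow_add_two_le (hB : ∀ i, (B i).IsHermitian) {σ : ℝ}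
    (hσ : (σ • 1 - ∑ i, B i ^ 2).PosSemidef) {m : ℕ} (hm : Even m) :
    𝔼 ε : ι → ℤˣ, (signedSum B ε ^ (m + 2)).trace
      ≤ (m + 1) * σ * 𝔼 ε, (signedSum B ε ^ m).trace :=
  calc 𝔼 ε : ι → ℤˣ, (signedSum B ε ^ (m + 2)).trace
      = ∑ i, 𝔼 ε : ι → ℤˣ, (ε i • B i * signedSum B ε ^ (m + 1)).trace := by
        rw [← Finset.expect_sum_comm]
        refine Finset.expect_congr rfl fun ε _ => ?_
        rw [← trace_sum, ← Finset.sum_mul, ← signedSum, ← pow_succ']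
    _ ≤ ∑ i, (m + 1) * 𝔼 ε, (B i ^ 2 * signedSum B ε ^ m).trace :=
        Finset.sum_le_sum fun i _ => expect_trace_smul_mul_signedSum_pow_le hB i hm
    _ = (m + 1) * 𝔼 ε, ((∑ i, B i ^ 2) * signedSum B ε ^ m).trace := by
        simp only [← Finset.mul_sum, ← Finset.expect_sum_comm, Finset.sum_mul, trace_sum]
    _ ≤ (m + 1) * 𝔼 ε, σ * (signedSum B ε ^ m).trace := by
        refine mul_le_mul_of_nonneg_left (Finset.expect_le_expect fun ε _ => ?_) (by positivity)
        rw [trace_mul_comm]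
        exact trace_mul_le_of_posSemidef_smul_one_sub
          (isHermitian_posSemidef_pow_of_even (isHermitian_signedSum hB ε) hm) hσ
    _ = (m + 1) * σ * 𝔼 ε, (signedSum B ε ^ m).trace := by
        rw [← Finset.mul_expect, mul_assoc]

theorem expect_trace_signedSum_pow_le (hB : ∀ i, (B i).IsHermitian) {σ : ℝ} (hσ0 : 0 ≤ σ)
    (hσ : (σ • 1 - ∑ i, B i ^ 2).PosSemidef) (p : ℕ) :
    𝔼 ε : ι → ℤˣ, (signedSum B ε ^ (2 * p)).trace
      ≤ (2 * p).factorial * (σ / 2) ^ p / p.factorial * Fintype.card κ := by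
  induction p with
  | zero => simp
  | succ p ih =>
    calc 𝔼 ε : ι → ℤˣ, (signedSum B ε ^ (2 * p + 2)).trace
        ≤ ((2 * p : ℕ) + 1) * σ * 𝔼 ε : ι → ℤˣ, (signedSum B ε ^ (2 * p)).trace :=
          expect_trace_signedSum_pow_add_two_le hB hσ (even_two_mul p)
      _ ≤ ((2 * p : ℕ) + 1) * σ
            * ((2 * p).factorial * (σ / 2) ^ p / p.factorial * Fintype.card κ) :=
          mul_le_mul_of_nonneg_left ih (by positivity)
      _ = (2 * (p + 1)).factorial * (σ / 2) ^ (p + 1) / (p + 1).factorial * Fintype.card κ := by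
          rw [show 2 * (p + 1) = 2 * p + 1 + 1 by ring, Nat.factorial_succ (2 * p + 1),
            Nat.factorial_succ (2 * p), Nat.factorial_succ p]
          push_cast
          rw [pow_succ]
          field_simp
          ring

theorem expect_sum_cosh_eigenvalues_signedSum_le (hB : ∀ i, (B i).IsHermitian) {σ : ℝ}
    (hσ0 : 0 ≤ σ) (hσ : (σ • 1 - ∑ i, B i ^ 2).PosSemidef) (θ : ℝ) :
    𝔼 ε : ι → ℤˣ, ∑ j, Real.cosh (θ * (isHermitian_signedSum hB ε).eigenvalues j)
      ≤ Fintype.card κ * Real.exp (θ ^ 2 * σ / 2) := by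
  have hcosh : HasSum
      (fun p => 𝔼 ε : ι → ℤˣ, θ ^ (2 * p) / (2 * p).factorial * (signedSum B ε ^ (2 * p)).trace)
      (𝔼 ε : ι → ℤˣ, ∑ j, Real.cosh (θ * (isHermitian_signedSum hB ε).eigenvalues j)) := by
    simp only [Fintype.expect_eq_sum_div_card]
    refine HasSum.div_const (hasSum_sum fun ε _ => ?_) _
    simp only [isHermitian_trace_pow_eq_sum (isHermitian_signedSum hB ε), Finset.mul_sum,
      div_mul_eq_mul_div, ← mul_pow]
    exact hasSum_sum fun j _ => Real.hasSum_cosh _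
  have hexp : HasSum (fun p : ℕ => Fintype.card κ * ((θ ^ 2 * σ / 2) ^ p / p.factorial))
      (Fintype.card κ * Real.exp (θ ^ 2 * σ / 2)) := by
    rw [Real.exp_eq_exp_ℝ]
    exact (NormedSpace.expSeries_div_hasSum_exp (θ ^ 2 * σ / 2)).mul_left (Fintype.card κ : ℝ)
  refine hasSum_le (fun p => ?_) hcosh hexp
  rw [← Finset.mul_expect]
  calc θ ^ (2 * p) / (2 * p).factorial * 𝔼 ε : ι → ℤˣ, (signedSum B ε ^ (2 * p)).trace
      ≤ θ ^ (2 * p) / (2 * p).factorial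
          * ((2 * p).factorial * (σ / 2) ^ p / p.factorial * Fintype.card κ) :=
        mul_le_mul_of_nonneg_left (expect_trace_signedSum_pow_le hB hσ0 hσ p)
          (div_nonneg ((even_two_mul p).pow_nonneg θ) (by positivity))
    _ = Fintype.card κ * ((θ ^ 2 * σ / 2) ^ p / p.factorial) := by
        rw [pow_mul, mul_div_assoc (θ ^ 2) σ 2, mul_pow]
        field_simp

theorem signedSum_sq_eq_zero {ι : Type*} [Fintype ι] {B : ι → Matrix κ κ ℝ}
    (hB : ∀ i, (B i).IsHermitian) (hneg : (-∑ i, B i ^ 2).PosSemidef) (ε : ι → ℤˣ) :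
    signedSum B ε ^ 2 = 0 := by
  classical
  have hpsd : ∀ ε, (signedSum B ε ^ 2).PosSemidef := fun ε =>
    isHermitian_posSemidef_pow_of_even (isHermitian_signedSum hB ε) even_two
  have hle : 𝔼 ε : ι → ℤˣ, (signedSum B ε ^ 2).trace ≤ 0 := by
    have h := expect_trace_signedSum_pow_add_two_le (σ := 0) hB (by simpa using hneg) Even.zero
    simpa using h
  have hzero := hle.antisymm (Finset.expect_nonneg fun ε _ => (hpsd ε).trace_nonneg)
  rw [Finset.expect_eq_zero_iff_of_nonneg fun ε _ => (hpsd ε).trace_nonneg] at hzero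
  exact (hpsd ε).trace_eq_zero_iff.mp (hzero ε (Finset.mem_univ ε))

theorem exp_div_two_le_sum_cosh_eigenvalues {A : Matrix κ κ ℝ} (hA : A.IsHermitian) {r σ : ℝ}
    (hr : 0 ≤ r) (hσ : 0 < σ) (hnot : ¬((r * σ) • 1 - A ^ 2).PosSemidef) :
    Real.exp r / 2 ≤ ∑ j, Real.cosh (√(r / σ) * hA.eigenvalues j) := by
  obtain ⟨j, hj⟩ : ∃ j, r * σ < hA.eigenvalues j ^ 2 := by
    by_contra! h
    exact hnot (isHermitian_posSemidef_smul_one_sub_pow hA h)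
  have hr_le : |r| ≤ |√(r / σ) * hA.eigenvalues j| := by
    refine sq_le_sq.mp ?_
    rw [mul_pow, Real.sq_sqrt (by positivity)]
    calc r ^ 2 = r / σ * (r * σ) := by field_simp
      _ ≤ r / σ * hA.eigenvalues j ^ 2 := by gcongr
  calc Real.exp r / 2 ≤ Real.cosh r := by
        rw [Real.cosh_eq]
        linarith [Real.exp_pos (-r)]
    _ ≤ Real.cosh (√(r / σ) * hA.eigenvalues j) := Real.cosh_le_cosh.mpr hr_le
    _ ≤ ∑ j, Real.cosh (√(r / σ) * hA.eigenvalues j) :=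
        Finset.single_le_sum (f := fun j => Real.cosh (√(r / σ) * hA.eigenvalues j))
          (fun j _ => (Real.cosh_pos _).le) (Finset.mem_univ j)

theorem uniformProb_not_posSemidef_sub_signedSum_sq_le (hB : ∀ i, (B i).IsHermitian) {σ : ℝ}
    (hσ0 : 0 ≤ σ) (hσ : (σ • 1 - ∑ i, B i ^ 2).PosSemidef) {r : ℝ} (hr : 0 ≤ r) :
    uniformProb {ε : ι → ℤˣ | ¬((r * σ) • 1 - signedSum B ε ^ 2).PosSemidef}
      ≤ 2 * Fintype.card κ * Real.exp (-(r / 2)) := by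
  rcases hσ0.eq_or_lt with rfl | hσ_pos
  · have hempty : {ε : ι → ℤˣ | ¬((r * 0) • 1 - signedSum B ε ^ 2).PosSemidef} = ∅ := by
      refine Set.eq_empty_of_forall_notMem fun ε hε => hε ?_
      rw [signedSum_sq_eq_zero hB (by simpa using hσ) ε, mul_zero, zero_smul, sub_zero]
      exact PosSemidef.zero
    rw [hempty]
    simpa [uniformProb] using by positivity
  have hmarkov : Real.exp r / 2
      * uniformProb {ε : ι → ℤˣ | ¬((r * σ) • 1 - signedSum B ε ^ 2).PosSemidef}
      ≤ Fintype.card κ * Real.exp (√(r / σ) ^ 2 * σ / 2) :=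
    (mul_uniformProb_le_expect (fun _ => Finset.sum_nonneg fun _ _ => (Real.cosh_pos _).le)
      fun _ => exp_div_two_le_sum_cosh_eigenvalues (isHermitian_signedSum hB _) hr hσ_pos).trans
      (expect_sum_cosh_eigenvalues_signedSum_le hB hσ0 hσ _)
  have hexponent : √(r / σ) ^ 2 * σ / 2 = r + -(r / 2) := by
    rw [Real.sq_sqrt (by positivity)]
    field_simp
    ring
  rw [hexponent, Real.exp_add] at hmarkov
  refine le_of_mul_le_mul_left ?_ (half_pos (Real.exp_pos r))
  linarith

end Khintchine

section Anticoncentration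

variable {N : ℕ}

theorem expect_add_signedSum_sq (a : Fin N → ℝ) (x : ℝ) :
    𝔼 ε, (x + signedSum a ε) ^ 2 = x ^ 2 + ∑ i, a i ^ 2 := by
  induction N generalizing x with
  | zero => simp [signedSum]
  | succ N ih =>
    simp only [expect_insertNth 0, signedSum_insertNth, ← add_assoc, ih, Units.neg_smul, one_smul,
      Fin.sum_univ_succAbove _ (0 : Fin (N + 1)), Function.comp_apply]
    ring

theorem uniformProb_insertNth (i : Fin (N + 1)) (E : Set (Fin (N + 1) → ℤˣ)) :
    uniformProb E = (uniformProb {ε : Fin N → ℤˣ | i.insertNth 1 ε ∈ E}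
      + uniformProb {ε : Fin N → ℤˣ | i.insertNth (-1) ε ∈ E}) / 2 :=
  expect_insertNth i (E.indicator 1)

theorem uniformProb_add_signedSum (p : ℝ → Prop) (a : Fin (N + 1) → ℝ) (x : ℝ)
    (i : Fin (N + 1)) :
    uniformProb {ε | p (x + signedSum a ε)}
      = (uniformProb {ε | p (x + a i + signedSum (a ∘ i.succAbove) ε)}
          + uniformProb {ε | p (x - a i + signedSum (a ∘ i.succAbove) ε)}) / 2 := by
  rw [uniformProb_insertNth i]
  simp only [Set.mem_ofPred_eq, signedSum_insertNth, Units.neg_smul, one_smul, ← add_assoc,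
    ← sub_eq_add_neg]

theorem uniformProb_lt_abs_signedSum_le (a : Fin N → ℝ) {r : ℝ} (hr : 0 < r) :
    uniformProb {ε | r < |signedSum a ε|} ≤ (∑ i, a i ^ 2) / r ^ 2 := by
  have hmarkov : r ^ 2 * uniformProb {ε | r < |signedSum a ε|} ≤ 𝔼 ε, signedSum a ε ^ 2 :=
    mul_uniformProb_le_expect (fun ε => sq_nonneg _) fun ε hε =>
      sq_le_sq.mpr ((abs_of_pos hr).trans_le (le_of_lt hε))
  have hmoment := expect_add_signedSum_sq a 0
  simp only [zero_add, ne_eq, OfNat.ofNat_ne_zero, not_false_eq_true, zero_pow] at hmoment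
  rw [le_div_iff₀' (by positivity)]
  exact hmarkov.trans_eq hmoment

/-- Replacing `ε` by `-ε` if necessary, `signedSum a ε` is opposite in sign to `x`, and then
`|signedSum a ε| ≤ 1 + |x|` is enough for `|x + signedSum a ε| ≤ 1`. -/
theorem le_uniformProb_abs_add_signedSum_le_one (a : Fin N → ℝ) {x : ℝ} (hx : |x| ≤ 1) :
    (1 - (∑ i, a i ^ 2) / (1 + |x|) ^ 2) / 2
      ≤ uniformProb {ε | |x + signedSum a ε| ≤ 1} := by
  set good := {ε : Fin N → ℤˣ | |x + signedSum a ε| ≤ 1} with hgood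
  have hcover : Set.univ ⊆ {ε | 1 + |x| < |signedSum a ε|}
      ∪ (good ∪ Equiv.neg (Fin N → ℤˣ) ⁻¹' good) := by
    intro ε _
    by_cases hε : 1 + |x| < |signedSum a ε|
    · exact Or.inl hε
    · right
      simp only [hgood, Set.mem_union, Set.mem_preimage, Equiv.neg_apply, Set.mem_ofPred_eq,
        signedSum_neg]
      grind
  have hprob := (uniformProb_mono hcover).trans
    ((uniformProb_union_le _ _).trans (add_le_add_right (uniformProb_union_le _ _) _))
  rw [uniformProb_univ, uniformProb_preimage_equiv] at hprob
  linarith [uniformProb_lt_abs_signedSum_le a (r := 1 + |x|) (by positivity)]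

theorem le_uniformProb_abs_add_signedSum_le_one_of_abs_le {a : Fin N → ℝ}
    (hsum : ∑ i, a i ^ 2 ≤ 1) (ha : ∀ i, |a i| ≤ 1 / 2) {x : ℝ} (hx : |x| ≤ 1) :
    5 / 18 ≤ uniformProb {ε | |x + signedSum a ε| ≤ 1} := by
  induction N generalizing x with
  | zero =>
    have huniv : {ε | |x + signedSum a ε| ≤ 1} = Set.univ :=
      Set.eq_univ_of_forall fun ε => by simpa [signedSum] using hx
    rw [huniv, uniformProb_univ]
    norm_num
  | succ N ih =>
    rcases le_or_gt (1 / 2) |x| with hx_large | hx_small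
    · have hvariance : (∑ i, a i ^ 2) / (1 + |x|) ^ 2 ≤ 4 / 9 := by
        rw [div_le_iff₀ (by positivity)]
        nlinarith
      linarith [le_uniformProb_abs_add_signedSum_le_one a hx]
    · have htail : ∑ i, (a ∘ Fin.succAbove 0) i ^ 2 ≤ 1 := by
        rw [Fin.sum_univ_succAbove _ 0] at hsum
        simp only [Function.comp_apply]
        linarith [sq_nonneg (a 0)]
      have hadd := ih htail (fun i => ha _)
        ((abs_add_le x (a 0)).trans (by linarith [ha 0]))
      have hsub := ih htail (fun i => ha _)
        ((abs_sub x (a 0)).trans (by linarith [ha 0]))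
      rw [uniformProb_add_signedSum (|·| ≤ 1) a x 0]
      linarith

theorem le_uniformProb_abs_signedSum_le_one {a : Fin N → ℝ} (hsum : ∑ i, a i ^ 2 ≤ 1) :
    5 / 18 ≤ uniformProb {ε | |signedSum a ε| ≤ 1} := by
  have hzero : {ε | |signedSum a ε| ≤ 1} = {ε | |0 + signedSum a ε| ≤ 1} := by
    simp only [zero_add]
  rw [hzero]
  by_cases hsmall : ∀ i, |a i| ≤ 1 / 2
  · exact le_uniformProb_abs_add_signedSum_le_one_of_abs_le hsum hsmall (by simp)
  push Not at hsmall
  obtain ⟨i, hi⟩ := hsmall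
  obtain ⟨M, rfl⟩ : ∃ M, N = M + 1 := Nat.exists_eq_succ_of_ne_zero (Fin.pos i).ne'
  have hrest : ∑ j, (a ∘ i.succAbove) j ^ 2 ≤ 1 - |a i| ^ 2 := by
    rw [Fin.sum_univ_succAbove _ i] at hsum
    simp only [Function.comp_apply, sq_abs]
    linarith
  have hai : |a i| ≤ 1 := by
    have hnonneg : 0 ≤ ∑ j, (a ∘ i.succAbove) j ^ 2 := Finset.sum_nonneg fun j _ => sq_nonneg _
    exact (sq_le_one_iff₀ (abs_nonneg _)).mp (by linarith)
  have hthird : (∑ j, (a ∘ i.succAbove) j ^ 2) / (1 + |a i|) ^ 2 ≤ 1 / 3 := by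
    rw [div_le_iff₀ (by positivity)]
    nlinarith
  have hadd := le_uniformProb_abs_add_signedSum_le_one (a ∘ i.succAbove) hai
  have hsub := le_uniformProb_abs_add_signedSum_le_one (a ∘ i.succAbove)
    ((abs_neg (a i)).trans_le hai)
  rw [abs_neg] at hsub
  rw [uniformProb_add_signedSum (|·| ≤ 1) a 0 i, zero_add, zero_sub]
  linarith

end Anticoncentration

section Rounding

theorem log_eight_mul_sum_natCast_nonneg {ι : Type*} [Fintype ι] (f : ι → ℕ) :
    0 ≤ Real.log (8 * ∑ k, (f k : ℝ)) := by
  have h := Real.log_natCast_nonneg (8 * ∑ k, f k)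
  rwa [Nat.cast_mul, Nat.cast_sum, Nat.cast_ofNat] at h

variable {N : ℕ} {I : Type*} [Fintype I] {κ : I → Type*} [∀ k, Fintype (κ k)]
  [∀ k, DecidableEq (κ k)]

theorem sum_uniformProb_not_posSemidef_le_quarter
    {B : (k : I) → Fin N → Matrix (κ k) (κ k) ℝ} (hB : ∀ k i, (B k i).IsHermitian)
    {σ : I → ℝ} (hσ0 : ∀ k, 0 ≤ σ k) (hσ : ∀ k, (σ k • 1 - ∑ i, B k i ^ 2).PosSemidef) :
    ∑ k, uniformProb {ε | ¬((2 * Real.log (8 * ∑ l, (Fintype.card (κ l) : ℝ)) * σ k) • 1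
      - signedSum (B k) ε ^ 2).PosSemidef} ≤ 1 / 4 := by
  set F : ℝ := ∑ l, (Fintype.card (κ l) : ℝ)
  have hlog : 0 ≤ Real.log (8 * F) := log_eight_mul_sum_natCast_nonneg fun l => Fintype.card (κ l)
  have hF0 : 0 ≤ F := Finset.sum_nonneg fun l _ => Nat.cast_nonneg _
  calc _ ≤ ∑ k, 2 * (Fintype.card (κ k) : ℝ) * Real.exp (-(2 * Real.log (8 * F) / 2)) :=
        Finset.sum_le_sum fun k _ => uniformProb_not_posSemidef_sub_signedSum_sq_le (hB k)
          (hσ0 k) (hσ k) (by positivity)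
    _ = 2 * F * Real.exp (-Real.log (8 * F)) := by
        rw [← Finset.sum_mul, ← Finset.mul_sum, mul_div_cancel_left₀ _ two_ne_zero]
    _ ≤ 1 / 4 := by
        rcases hF0.eq_or_lt with h0 | hpos
        · simp [← h0]
        · rw [Real.exp_neg, Real.exp_log (by positivity)]
          field_simp
          norm_num

theorem exists_abs_signedSum_le_one_forall_posSemidef {a : Fin N → ℝ} (ha : ∑ i, a i ^ 2 ≤ 1)
    {B : (k : I) → Fin N → Matrix (κ k) (κ k) ℝ} (hB : ∀ k i, (B k i).IsHermitian)
    {σ : I → ℝ} (hσ0 : ∀ k, 0 ≤ σ k) (hσ : ∀ k, (σ k • 1 - ∑ i, B k i ^ 2).PosSemidef) :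
    ∃ ε, |signedSum a ε| ≤ 1 ∧
      ∀ k, ((2 * Real.log (8 * ∑ l, (Fintype.card (κ l) : ℝ)) * σ k) • 1
        - signedSum (B k) ε ^ 2).PosSemidef := by
  by_contra! hbad
  have hcover : {ε | |signedSum a ε| ≤ 1}
      ⊆ ⋃ k, {ε | ¬((2 * Real.log (8 * ∑ l, (Fintype.card (κ l) : ℝ)) * σ k) • 1
        - signedSum (B k) ε ^ 2).PosSemidef} :=
    fun ε hε => Set.mem_iUnion.mpr (hbad ε hε)
  linarith [le_uniformProb_abs_signedSum_le_one ha, uniformProb_mono hcover,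
    uniformProb_iUnion_le fun k => {ε | ¬((2 * Real.log (8 * ∑ l, (Fintype.card (κ l) : ℝ)) * σ k)
      • 1 - signedSum (B k) ε ^ 2).PosSemidef}, sum_uniformProb_not_posSemidef_le_quarter hB hσ0 hσ]

end Rounding

section ConicDuality

variable {E : Type*} [AddCommGroup E] [Module ℝ E] {C : PointedCone ℝ (E × ℝ)} {q : E} {c : ℝ}

theorem nonneg_of_zero_mem_of_forall_le (hq : ∃ r, (q, r) ∈ C) (hc : ∀ r, (q, r) ∈ C → c ≤ r)
    {r : ℝ} (hr : (0, r) ∈ C) : 0 ≤ r := by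
  by_contra! hneg
  obtain ⟨r₀, hr₀⟩ := hq
  have hnum : 0 ≤ (r₀ - c + 1) / -r :=
    div_nonneg (by linarith [hc r₀ hr₀]) (neg_nonneg.mpr hneg.le)
  have hmem : (q, r₀ + (r₀ - c + 1) / -r * r) ∈ C := by
    have h := C.add_mem hr₀ (PointedCone.smul_mem C hnum hr)
    simpa using h
  have hcancel : (r₀ - c + 1) / -r * r = -(r₀ - c + 1) := by
    have := hneg.ne
    field_simp
  linarith [hc _ hmem]

theorem mul_le_of_smul_mem_of_forall_le (hq : ∃ r, (q, r) ∈ C) (hc : ∀ r, (q, r) ∈ C → c ≤ r)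
    {a r : ℝ} (ha : 0 ≤ a) (hr : (a • q, r) ∈ C) : a * c ≤ r := by
  rcases ha.eq_or_lt with rfl | hpos
  · rw [zero_smul] at hr
    rw [zero_mul]
    exact nonneg_of_zero_mem_of_forall_le hq hc hr
  · have hmem : (q, a⁻¹ * r) ∈ C := by
      have h := PointedCone.smul_mem C (inv_pos.mpr hpos).le hr
      simpa [smul_smul, inv_mul_cancel₀ hpos.ne'] using h
    rw [← le_inv_mul_iff₀ hpos]
    exact hc _ hmem

/-- Apply Riesz extension to `(0, r) ↦ r` on the cone generated by `C` and `(-q, -c)`. -/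
theorem exists_linearMap_le_of_forall_le (hdom : ∀ x, ∃ r, (x, r) ∈ C)
    (hc : ∀ r, (q, r) ∈ C → c ≤ r) :
    ∃ g : E →ₗ[ℝ] ℝ, c ≤ g q ∧ ∀ p ∈ C, g p.1 ≤ p.2 := by
  set C' : PointedCone ℝ (E × ℝ) := C ⊔ Submodule.span _ {(-q, -c)}
  set f : (E × ℝ) →ₗ.[ℝ] ℝ :=
    ⟨(LinearMap.fst ℝ E ℝ).ker, LinearMap.snd ℝ E ℝ ∘ₗ Submodule.subtype _⟩
  have hnonneg : ∀ x : f.domain, (x : E × ℝ) ∈ C' → 0 ≤ f x := by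
    rintro ⟨⟨y, v⟩, hy⟩ hx
    obtain rfl : y = 0 := hy
    obtain ⟨⟨x, r⟩, hxr, _, hspan, hsum⟩ := Submodule.mem_sup.mp hx
    obtain ⟨a, rfl⟩ := Submodule.mem_span_singleton.mp hspan
    obtain ⟨hx_eq, hv_eq⟩ : x + (a : ℝ) • -q = 0 ∧ r + (a : ℝ) * -c = v := Prod.mk.inj hsum
    rw [smul_neg, ← sub_eq_add_neg, sub_eq_zero] at hx_eq
    have hle : a * c ≤ r := mul_le_of_smul_mem_of_forall_le (hdom q) hc a.2 (hx_eq ▸ hxr)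
    change 0 ≤ v
    linarith
  have hdense : ∀ y, ∃ x : f.domain, (x : E × ℝ) + y ∈ C' := by
    rintro ⟨y, v⟩
    obtain ⟨r, hr⟩ := hdom y
    refine ⟨⟨(0, r - v), rfl⟩, Submodule.mem_sup_left ?_⟩
    simpa using hr
  obtain ⟨g, hgf, hg⟩ := riesz_extension C' f hnonneg hdense
  have hg_add : ∀ x r, g (x, r) = g (x, 0) + r := fun x r => by
    have h := hgf ⟨(0, r), rfl⟩
    rw [← show (x, 0) + (0, r) = (x, r) by simp, map_add]
    exact congrArg _ h
  refine ⟨-(g ∘ₗ LinearMap.inl ℝ E ℝ), ?_, fun p hp => ?_⟩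
  · have h := hg (-q, -c) (Submodule.mem_sup_right (Submodule.mem_span_singleton_self _))
    rw [← Prod.neg_mk, map_neg, hg_add] at h
    simp only [LinearMap.neg_apply, LinearMap.comp_apply, LinearMap.inl_apply]
    linarith
  · have h := hg p (Submodule.mem_sup_left hp)
    rw [← Prod.mk.eta (p := p), hg_add] at h
    simp only [LinearMap.neg_apply, LinearMap.comp_apply, LinearMap.inl_apply]
    linarith

end ConicDuality

section QuadraticForm

theorem sum_vecMulVec_transpose_self {m n : Type*} [Fintype n] (X : Matrix m n ℝ) :
    ∑ j, vecMulVec (Xᵀ j) (Xᵀ j) = X * Xᵀ := by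
  ext i l
  simp only [Matrix.sum_apply, vecMulVec_apply, transpose_apply, mul_apply]

variable {m : Type*} [Fintype m]

theorem dotProduct_mulVec_signedSum {ι : Type*} [Fintype ι] {x : ι → m → ℝ} {Q : Matrix m m ℝ}
    (hx : Pairwise fun i j => x i ⬝ᵥ Q *ᵥ x j = 0) (ε : ι → ℤˣ) :
    signedSum x ε ⬝ᵥ Q *ᵥ signedSum x ε = ∑ i, x i ⬝ᵥ Q *ᵥ x i := by
  have hterm : ∀ i j, (ε i • x i) ⬝ᵥ Q *ᵥ (ε j • x j)
      = ((ε i * ε j : ℤˣ) : ℤ) • (x i ⬝ᵥ Q *ᵥ x j) := fun i j => by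
    simp only [Units.smul_def, Units.val_mul, mul_comm (ε i : ℤ), mul_smul, mulVec_smul,
      dotProduct_smul, smul_dotProduct]
  simp only [signedSum, mulVec_sum, sum_dotProduct, dotProduct_sum, hterm]
  refine Finset.sum_congr rfl fun i _ => ?_
  rw [Fintype.sum_eq_single i fun j hij => by rw [hx hij, smul_zero], Int.units_mul_self,
    Units.val_one, one_smul]

theorem smul_dotProduct_mulVec_smul (M : Matrix m m ℝ) (a : ℝ) (x : m → ℝ) :
    (a • x) ⬝ᵥ M *ᵥ (a • x) = a ^ 2 * (x ⬝ᵥ M *ᵥ x) := by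
  rw [mulVec_smul, smul_dotProduct, dotProduct_smul, smul_eq_mul, smul_eq_mul, ← mul_assoc, sq]

theorem exists_forall_dotProduct_mulVec_le_mul {D : Matrix m m ℝ}
    (hD : ∀ x ≠ 0, 0 < x ⬝ᵥ D *ᵥ x) (M : Matrix m m ℝ) :
    ∃ a, 0 ≤ a ∧ ∀ x, x ⬝ᵥ M *ᵥ x ≤ a * (x ⬝ᵥ D *ᵥ x) := by
  have hcont : ContinuousOn (fun x => (x ⬝ᵥ M *ᵥ x) / (x ⬝ᵥ D *ᵥ x)) (Metric.sphere 0 1) :=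
    ContinuousOn.div (by fun_prop) (by fun_prop) fun x hx =>
      (hD x (ne_zero_of_mem_unit_sphere ⟨x, hx⟩)).ne'
  obtain ⟨a, ha⟩ := (isCompact_sphere (0 : m → ℝ) 1).bddAbove_image hcont
  refine ⟨max a 0, le_max_right _ _, fun x => ?_⟩
  rcases eq_or_ne x 0 with rfl | hx
  · simp
  have hsphere : ‖x‖⁻¹ • x ∈ Metric.sphere (0 : m → ℝ) 1 := by
    rw [mem_sphere_zero_iff_norm, norm_smul, norm_inv, norm_norm,
      inv_mul_cancel₀ (norm_ne_zero_iff.mpr hx)]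
  have hratio : (x ⬝ᵥ M *ᵥ x) / (x ⬝ᵥ D *ᵥ x) ≤ a := by
    have h := ha (Set.mem_image_of_mem _ hsphere)
    simp only [smul_dotProduct_mulVec_smul] at h
    rwa [mul_div_mul_left] at h
    exact pow_ne_zero 2 (inv_ne_zero (norm_ne_zero_iff.mpr hx))
  rw [← div_le_iff₀ (hD x hx)]
  exact hratio.trans (le_max_left _ _)

theorem posSemidef_exists_eq_sum_vecMulVec_pairwise {Y Q : Matrix m m ℝ}
    (hY : Y.PosSemidef) (hQ : Q.IsHermitian) :
    ∃ (N : ℕ) (x : Fin N → m → ℝ), Y = ∑ j, vecMulVec (x j) (x j) ∧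
      Pairwise fun i j => x i ⬝ᵥ Q *ᵥ x j = 0 := by
  obtain ⟨N, v, hv⟩ := posSemidef_iff_eq_sum_vecMulVec.mp hY
  set X : Matrix m (Fin N) ℝ := (of v)ᵀ
  have hC : (Xᵀ * Q * X).IsHermitian := isHermitian_conjTranspose_mul_mul X hQ
  set U : Matrix (Fin N) (Fin N) ℝ := hC.eigenvectorUnitary.1
  refine ⟨N, (X * U)ᵀ, ?_, fun i j hij => ?_⟩
  · have hU : U * Uᵀ = 1 := Unitary.mul_star_self_of_mem hC.eigenvectorUnitary.2
    have hYX : Y = X * Xᵀ := hv.trans (sum_vecMulVec_transpose_self X)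
    rw [sum_vecMulVec_transpose_self, transpose_mul, Matrix.mul_assoc, ← Matrix.mul_assoc U, hU,
      Matrix.one_mul, hYX]
  · have hdiag : Uᵀ * (Xᵀ * Q * X) * U = diagonal hC.eigenvalues := by
      have h := hC.conjStarAlgAut_star_eigenvectorUnitary
      rwa [Unitary.conjStarAlgAut_star_apply] at h
    calc (X * U)ᵀ i ⬝ᵥ Q *ᵥ (X * U)ᵀ j = ((X * U)ᵀ * (Q * (X * U))) i j := rfl
      _ = (Uᵀ * (Xᵀ * Q * X) * U) i j := by simp only [transpose_mul, Matrix.mul_assoc]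
      _ = 0 := by rw [hdiag, diagonal_apply_ne _ hij]

theorem exists_posSemidef_forall_eq_trace_mul {g : Matrix m m ℝ →ₗ[ℝ] ℝ}
    (hg : ∀ M, (∀ x, 0 ≤ x ⬝ᵥ M *ᵥ x) → 0 ≤ g M) :
    ∃ Y : Matrix m m ℝ, Y.PosSemidef ∧ ∀ M, g M = (M * Y).trace := by
  classical
  set Y : Matrix m m ℝ := of fun i j => g (single j i 1)
  have hgY : ∀ M, g M = (M * Y).trace := fun M => by
    conv_lhs => rw [matrix_eq_sum_single M]
    simp only [map_sum, trace, diag_apply, mul_apply, Y, of_apply]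
    refine Finset.sum_congr rfl fun i _ => Finset.sum_congr rfl fun j _ => ?_
    rw [← smul_eq_mul, ← map_smul, smul_single, smul_eq_mul, mul_one]
  have hsymm : ∀ i j, g (single j i 1) ≤ g (single i j 1) := fun i j => by
    rw [← sub_nonneg, ← map_sub]
    refine hg _ fun x => le_of_eq ?_
    rw [sub_mulVec, dotProduct_sub, single_mulVec, single_mulVec]
    simp [Function.update, dotProduct, mul_comm]
  refine ⟨Y, PosSemidef.of_dotProduct_mulVec_nonneg ?_ fun x => ?_, hgY⟩
  · ext i j
    exact (hsymm j i).antisymm (hsymm i j)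
  · rw [star_trivial, ← trace_mul_vecMulVec_self, trace_mul_comm, ← hgY]
    exact hg _ fun y => by simpa using (posSemidef_vecMulVec_self_star x).dotProduct_mulVec_nonneg y

theorem exists_dotProduct_self_eq_one_posSemidef_smul_one_sub [DecidableEq m] [Nonempty m]
    {A : Matrix m m ℝ} (hA : A.IsHermitian) :
    ∃ v : m → ℝ, v ⬝ᵥ v = 1 ∧ ((v ⬝ᵥ A *ᵥ v) • 1 - A).PosSemidef := by
  obtain ⟨i, hi⟩ := Finite.exists_max hA.eigenvalues
  have hunit : hA.eigenvectorBasis i ⬝ᵥ hA.eigenvectorBasis i = 1 := by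
    have h := hA.eigenvectorBasis.inner_eq_one i
    rwa [EuclideanSpace.inner_eq_star_dotProduct, star_trivial] at h
  have hvalue : hA.eigenvectorBasis i ⬝ᵥ A *ᵥ hA.eigenvectorBasis i = hA.eigenvalues i := by
    rw [hA.mulVec_eigenvectorBasis, dotProduct_smul, hunit, smul_eq_mul, mul_one]
  refine ⟨hA.eigenvectorBasis i, hunit, ?_⟩
  rw [hvalue]
  simpa only [pow_one] using
    isHermitian_posSemidef_smul_one_sub_pow hA (m := 1) fun j => by simpa only [pow_one] using hi j

end QuadraticForm

section SupportFunction

variable {K : ℕ} {T : Set (Fin K → ℝ)}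

theorem le_suppFn (hT : IsCompact T) (lam : Fin K → ℝ) {t : Fin K → ℝ} (ht : t ∈ T) :
    ∑ k, lam k * t k ≤ suppFn T lam :=
  le_csSup (hT.image (by fun_prop)).bddAbove ⟨t, ht, rfl⟩

theorem suppFn_le (hne : T.Nonempty) {lam : Fin K → ℝ} {c : ℝ}
    (h : ∀ t ∈ T, ∑ k, lam k * t k ≤ c) : suppFn T lam ≤ c :=
  csSup_le (hne.image _) (Set.forall_mem_image.mpr h)

theorem suppFn_nonneg (hT : ∀ t ∈ T, ∀ k, 0 ≤ t k) {lam : Fin K → ℝ} (hlam : ∀ k, 0 ≤ lam k) :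
    0 ≤ suppFn T lam :=
  Real.sSup_nonneg <| Set.forall_mem_image.mpr fun t ht =>
    Finset.sum_nonneg fun k _ => mul_nonneg (hlam k) (hT t ht k)

theorem suppFn_sup_zero_le (hne : T.Nonempty)
    (hmono : ∀ t t' : Fin K → ℝ, (∀ k, 0 ≤ t k) → (∀ k, t k ≤ t' k) → t' ∈ T → t ∈ T)
    (hpos : ∀ t ∈ T, ∀ k, 0 ≤ t k) {lam : Fin K → ℝ} {u : ℝ}
    (h : ∀ t ∈ T, ∑ k, lam k * t k ≤ u) : suppFn T (lam ⊔ 0) ≤ u := by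
  classical
  refine suppFn_le hne fun t ht => ?_
  set t' : Fin K → ℝ := fun k => if 0 ≤ lam k then t k else 0 with ht'
  have hmem : t' ∈ T := by
    refine hmono t' t (fun k => ?_) (fun k => ?_) ht <;> simp only [ht'] <;> split_ifs <;>
      simp [hpos t ht k]
  calc ∑ k, (lam ⊔ 0) k * t k = ∑ k, lam k * t' k := by
        refine Finset.sum_congr rfl fun k _ => ?_
        simp only [ht', Pi.sup_apply, Pi.zero_apply]
        split_ifs with hk
        · rw [sup_of_le_left hk]
        · rw [sup_of_le_right (not_le.mp hk).le, zero_mul, mul_zero]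
    _ ≤ u := h t' hmem

theorem mem_of_forall_le_suppFn (hne : T.Nonempty) (hconv : Convex ℝ T) (hclosed : IsClosed T)
    (hmono : ∀ t t' : Fin K → ℝ, (∀ k, 0 ≤ t k) → (∀ k, t k ≤ t' k) → t' ∈ T → t ∈ T)
    (hpos : ∀ t ∈ T, ∀ k, 0 ≤ t k) {t : Fin K → ℝ} (ht : ∀ k, 0 ≤ t k)
    (h : ∀ lam : Fin K → ℝ, (∀ k, 0 ≤ lam k) → ∑ k, lam k * t k ≤ suppFn T lam) : t ∈ T := by
  by_contra hmem
  obtain ⟨g, u, hg, hu⟩ := geometric_hahn_banach_closed_point hconv hclosed hmem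
  set lam : Fin K → ℝ := fun k => g (Pi.single k 1)
  have hg_eq : ∀ y : Fin K → ℝ, g y = ∑ k, lam k * y k := fun y => by
    conv_lhs => rw [pi_eq_sum_univ' y, map_sum]
    simp only [map_smul, smul_eq_mul, mul_comm, lam]
  have hsupp : suppFn T (lam ⊔ 0) ≤ u :=
    suppFn_sup_zero_le hne hmono hpos fun y hy => (hg_eq y).symm.trans_le (hg y hy).le
  have hle : g t ≤ ∑ k, (lam ⊔ 0) k * t k := by
    rw [hg_eq]
    exact Finset.sum_le_sum fun k _ => mul_le_mul_of_nonneg_right le_sup_left (ht k)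
  linarith [h (lam ⊔ 0) fun k => le_sup_right]

theorem exists_mem_forall_posSemidef_smul_one_sub {f : Fin K → ℕ} (hf : ∀ k, 1 ≤ f k)
    (hne : T.Nonempty) (hconv : Convex ℝ T) (hclosed : IsClosed T)
    (hmono : ∀ t t' : Fin K → ℝ, (∀ k, 0 ≤ t k) → (∀ k, t k ≤ t' k) → t' ∈ T → t ∈ T)
    (hpos : ∀ t ∈ T, ∀ k, 0 ≤ t k) {s : ℝ} (hs : 0 < s)
    {G : (k : Fin K) → Matrix (Fin (f k)) (Fin (f k)) ℝ} (hG : ∀ k, (G k).PosSemidef)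
    (h : ∀ Λ : (k : Fin K) → Matrix (Fin (f k)) (Fin (f k)) ℝ, (∀ k, (Λ k).PosSemidef) →
      ∑ k, (Λ k * G k).trace ≤ s * suppFn T (lamOf Λ)) :
    ∃ t ∈ T, ∀ k, ((s * t k) • 1 - G k).PosSemidef := by
  have htop : ∀ k, ∃ v : Fin (f k) → ℝ,
      v ⬝ᵥ v = 1 ∧ ((v ⬝ᵥ G k *ᵥ v) • 1 - G k).PosSemidef := fun k =>
    haveI := Fin.pos_iff_nonempty.mp (hf k)
    exists_dotProduct_self_eq_one_posSemidef_smul_one_sub (hG k).isHermitian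
  choose v hv hle using htop
  refine ⟨fun k => v k ⬝ᵥ G k *ᵥ v k / s, ?_, fun k => by
    rw [mul_div_cancel₀ _ hs.ne']
    exact hle k⟩
  refine mem_of_forall_le_suppFn hne hconv hclosed hmono hpos
    (fun k => div_nonneg (by simpa using (hG k).dotProduct_mulVec_nonneg (v k)) hs.le)
    fun lam hlam => ?_
  have hlamOf : lamOf (fun k => lam k • vecMulVec (v k) (v k)) = lam := funext fun k => by
    rw [lamOf, trace_smul, trace_vecMulVec, hv, smul_eq_mul, mul_one]
  have hbound := h (fun k => lam k • vecMulVec (v k) (v k)) fun k => by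
    simpa using (posSemidef_vecMulVec_self_star (v k)).smul (hlam k)
  rw [hlamOf] at hbound
  simp only [smul_mul, trace_smul, trace_mul_comm (vecMulVec _ _), trace_mul_vecMulVec_self,
    smul_eq_mul] at hbound
  simp only [← mul_div_assoc, ← Finset.sum_div]
  rwa [div_le_iff₀' hs]

end SupportFunction

section Relaxation

theorem isHermitian_sum_smul {ι κ : Type*} [Fintype ι] {B : ι → Matrix κ κ ℝ}
    (hB : ∀ i, (B i).IsHermitian) (z : ι → ℝ) : (∑ i, z i • B i).IsHermitian :=
  isSelfAdjoint_sum _ fun i _ => (hB i).smul (IsSelfAdjoint.all (z i))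

theorem calSstar_isSymm {nb fk : ℕ} (B : Fin nb → Matrix (Fin fk) (Fin fk) ℝ)
    (Λ : Matrix (Fin fk) (Fin fk) ℝ) : (calSstar B Λ).IsSymm := by
  ext i j
  rw [transpose_apply, calSstar, of_apply, of_apply, add_comm]

theorem dotProduct_calSstar_mulVec {nb fk : ℕ} (B : Fin nb → Matrix (Fin fk) (Fin fk) ℝ)
    (Λ : Matrix (Fin fk) (Fin fk) ℝ) (z : Fin nb → ℝ) :
    z ⬝ᵥ calSstar B Λ *ᵥ z = (Λ * (∑ i, z i • B i) ^ 2).trace := by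
  have hsq : (∑ i, z i • B i) ^ 2 = ∑ i, ∑ j, (z i * z j) • (B i * B j) := by
    simp only [sq, Finset.sum_mul_sum, smul_mul_smul_comm]
  have hswap : (∑ i, z i • B i) ^ 2 = ∑ i, ∑ j, (z i * z j) • (B j * B i) := by
    rw [hsq, Finset.sum_comm]
    exact Finset.sum_congr rfl fun i _ => Finset.sum_congr rfl fun j _ => by rw [mul_comm]
  have havg : (∑ i, z i • B i) ^ 2
      = ∑ i, ∑ j, (z i * z j) • ((1 / 2 : ℝ) • (B i * B j + B j * B i)) :=
    calc (∑ i, z i • B i) ^ 2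
        = (1 / 2 : ℝ) • ((∑ i, z i • B i) ^ 2 + (∑ i, z i • B i) ^ 2) := by
          rw [← two_smul ℝ, smul_smul, one_div_mul_cancel two_ne_zero, one_smul]
      _ = ∑ i, ∑ j, (z i * z j) • ((1 / 2 : ℝ) • (B i * B j + B j * B i)) := by
          nth_rewrite 1 [hsq]
          rw [hswap]
          simp only [← Finset.sum_add_distrib, ← smul_add, Finset.smul_sum, smul_comm (1 / 2 : ℝ)]
  simp only [havg, trace_sum, Matrix.mul_smul, trace_smul, dotProduct, mulVec, calSstar,
    of_apply, Finset.mul_sum, smul_eq_mul]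
  exact Finset.sum_congr rfl fun i _ => Finset.sum_congr rfl fun j _ => by ring

variable {nb K : ℕ} {f : Fin K → ℕ} {S : (k : Fin K) → Fin nb → Matrix (Fin (f k)) (Fin (f k)) ℝ}

/-- The matrix `BlockDiag(∑ k, 𝒮_k^*[Λ_k], μ)` of the semidefinite relaxation. -/
def relaxationMatrix (S : (k : Fin K) → Fin nb → Matrix (Fin (f k)) (Fin (f k)) ℝ)
    (Λ : (k : Fin K) → Matrix (Fin (f k)) (Fin (f k)) ℝ) (μ : ℝ) :
    Matrix (Fin nb ⊕ Unit) (Fin nb ⊕ Unit) ℝ :=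
  blockDiagOne (∑ k, calSstar (S k) (Λ k)) μ

theorem dotProduct_relaxationMatrix_mulVec (Λ : (k : Fin K) → Matrix (Fin (f k)) (Fin (f k)) ℝ)
    (μ : ℝ) (ξ : Fin nb ⊕ Unit → ℝ) :
    ξ ⬝ᵥ relaxationMatrix S Λ μ *ᵥ ξ
      = ∑ k, (Λ k * (∑ i, ξ (.inl i) • S k i) ^ 2).trace + μ * ξ (.inr ()) ^ 2 := by
  obtain ⟨z, w, rfl⟩ : ∃ z w, Sum.elim z w = ξ := ⟨_, _, Sum.elim_comp_inl_inr ξ⟩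
  simp only [relaxationMatrix, blockDiagOne, fromBlocks_mulVec, sumElim_dotProduct_sumElim,
    Sum.elim_comp_inl, Sum.elim_comp_inr, zero_mulVec, add_zero, zero_add, sum_mulVec,
    dotProduct_sum, dotProduct_calSstar_mulVec, Sum.elim_inl, Sum.elim_inr]
  congr 1
  simp only [dotProduct, mulVec, of_apply, Fintype.sum_unique, PUnit.default_eq_unit]
  ring

theorem relaxationMatrix_isSymm (Λ : (k : Fin K) → Matrix (Fin (f k)) (Fin (f k)) ℝ) (μ : ℝ) :
    (relaxationMatrix S Λ μ).IsSymm :=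
  IsSymm.fromBlocks (by simp only [IsSymm, transpose_sum, (calSstar_isSymm _ _).eq])
    transpose_zero rfl

/-- Feasibility of `(Λ, μ)` for the semidefinite relaxation with objective matrix `Q`. The matrix
inequality is an inequality of quadratic forms, which makes sense even if `Q` is not symmetric. -/
structure IsRelaxationFeasible (S : (k : Fin K) → Fin nb → Matrix (Fin (f k)) (Fin (f k)) ℝ)
    (Q : Matrix (Fin nb ⊕ Unit) (Fin nb ⊕ Unit) ℝ)
    (Λ : (k : Fin K) → Matrix (Fin (f k)) (Fin (f k)) ℝ) (μ : ℝ) : Prop where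
  posSemidef : ∀ k, (Λ k).PosSemidef
  nonneg : 0 ≤ μ
  form_le : ∀ ξ, ξ ⬝ᵥ Q *ᵥ ξ ≤ ξ ⬝ᵥ relaxationMatrix S Λ μ *ᵥ ξ

namespace IsRelaxationFeasible

variable {Q Q' : Matrix (Fin nb ⊕ Unit) (Fin nb ⊕ Unit) ℝ}
  {Λ Λ' : (k : Fin K) → Matrix (Fin (f k)) (Fin (f k)) ℝ} {μ μ' : ℝ}

theorem add (h : IsRelaxationFeasible S Q Λ μ) (h' : IsRelaxationFeasible S Q' Λ' μ') :
    IsRelaxationFeasible S (Q + Q') (Λ + Λ') (μ + μ') where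
  posSemidef k := (h.posSemidef k).add (h'.posSemidef k)
  nonneg := add_nonneg h.nonneg h'.nonneg
  form_le ξ := by
    have hsum := add_le_add (h.form_le ξ) (h'.form_le ξ)
    simp only [dotProduct_relaxationMatrix_mulVec, Pi.add_apply, Matrix.add_mul, trace_add,
      Finset.sum_add_distrib, add_mulVec, dotProduct_add] at hsum ⊢
    linarith

theorem smul (h : IsRelaxationFeasible S Q Λ μ) {a : ℝ} (ha : 0 ≤ a) :
    IsRelaxationFeasible S (a • Q) (a • Λ) (a * μ) where
  posSemidef k := (h.posSemidef k).smul ha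
  nonneg := mul_nonneg ha h.nonneg
  form_le ξ := by
    have hmul := mul_le_mul_of_nonneg_left (h.form_le ξ) ha
    simpa only [dotProduct_relaxationMatrix_mulVec, Pi.smul_apply, smul_mul, trace_smul,
      smul_eq_mul, ← Finset.mul_sum, smul_mulVec, dotProduct_smul, mul_assoc, mul_add] using hmul

theorem of_form_nonpos (hQ : ∀ ξ, ξ ⬝ᵥ Q *ᵥ ξ ≤ 0) : IsRelaxationFeasible S Q 0 0 where
  posSemidef _ := .zero
  nonneg := le_rfl
  form_le ξ := by simpa [dotProduct_relaxationMatrix_mulVec] using hQ ξ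

end IsRelaxationFeasible

theorem isRelaxationFeasible_relaxationMatrix
    {Λ : (k : Fin K) → Matrix (Fin (f k)) (Fin (f k)) ℝ} {μ : ℝ} (hΛ : ∀ k, (Λ k).PosSemidef)
    (hμ : 0 ≤ μ) : IsRelaxationFeasible S (relaxationMatrix S Λ μ) Λ μ :=
  ⟨hΛ, hμ, fun _ => le_rfl⟩

theorem isRelaxationFeasible_iff_posSemidef_sub {Q : Matrix (Fin nb ⊕ Unit) (Fin nb ⊕ Unit) ℝ}
    (hQ : Q.IsSymm) {Λ : (k : Fin K) → Matrix (Fin (f k)) (Fin (f k)) ℝ} {μ : ℝ} :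
    IsRelaxationFeasible S Q Λ μ ↔
      (∀ k, (Λ k).PosSemidef) ∧ 0 ≤ μ ∧ (relaxationMatrix S Λ μ - Q).PosSemidef := by
  have hform : (relaxationMatrix S Λ μ - Q).PosSemidef ↔
      ∀ ξ, ξ ⬝ᵥ Q *ᵥ ξ ≤ ξ ⬝ᵥ relaxationMatrix S Λ μ *ᵥ ξ := by
    have hherm : (relaxationMatrix S Λ μ - Q).IsHermitian :=
      (relaxationMatrix_isSymm Λ μ).sub hQ
    simp only [posSemidef_iff_dotProduct_mulVec, hherm, true_and, star_trivial, sub_mulVec,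
      dotProduct_sub, sub_nonneg]
  rw [hform]
  exact ⟨fun h => ⟨h.posSemidef, h.nonneg, h.form_le⟩, fun h => ⟨h.1, h.2.1, h.2.2⟩⟩

theorem dotProduct_relaxationMatrix_one_mulVec_pos (hS : ∀ k i, (S k i).IsHermitian)
    (hnd : ∀ z : Fin nb → ℝ, (∀ k, ∑ i, z i • S k i = 0) → z = 0) {ξ : Fin nb ⊕ Unit → ℝ}
    (hξ : ξ ≠ 0) : 0 < ξ ⬝ᵥ relaxationMatrix S (fun _ => 1) 1 *ᵥ ξ := by
  set W : (k : Fin K) → Matrix (Fin (f k)) (Fin (f k)) ℝ := fun k => ∑ i, ξ (.inl i) • S k i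
  have hW : ∀ k, (W k).IsHermitian := fun k => isHermitian_sum_smul (hS k) _
  have htrace : ∀ k ∈ Finset.univ, 0 ≤ (W k ^ 2).trace := fun k _ =>
    (isHermitian_posSemidef_pow_of_even (hW k) even_two).trace_nonneg
  simp only [dotProduct_relaxationMatrix_mulVec, one_mul]
  refine (add_nonneg (Finset.sum_nonneg htrace) (sq_nonneg _)).lt_of_ne' fun h => hξ ?_
  obtain ⟨hW0, hw0⟩ :=
    (add_eq_zero_iff_of_nonneg (Finset.sum_nonneg htrace) (sq_nonneg _)).mp h
  have hz0 := hnd (fun i => ξ (.inl i)) fun k => by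
    have h0 := (Finset.sum_eq_zero_iff_of_nonneg htrace).mp hW0 k (Finset.mem_univ k)
    rw [sq] at h0
    nth_rewrite 1 [← (hW k).eq] at h0
    exact trace_conjTranspose_mul_self_eq_zero_iff.mp h0
  ext (i | _)
  · exact congrFun hz0 i
  · exact pow_eq_zero_iff two_ne_zero |>.mp hw0

theorem exists_isRelaxationFeasible (hS : ∀ k i, (S k i).IsHermitian)
    (hnd : ∀ z : Fin nb → ℝ, (∀ k, ∑ i, z i • S k i = 0) → z = 0)
    (Q : Matrix (Fin nb ⊕ Unit) (Fin nb ⊕ Unit) ℝ) : ∃ Λ μ, IsRelaxationFeasible S Q Λ μ := by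
  obtain ⟨a, ha, hle⟩ := exists_forall_dotProduct_mulVec_le_mul
    (fun ξ hξ => dotProduct_relaxationMatrix_one_mulVec_pos hS hnd hξ) Q
  have hfeas := (isRelaxationFeasible_relaxationMatrix (S := S) (Λ := fun _ => 1)
    (fun _ => .one) zero_le_one).smul ha
  refine ⟨_, _, hfeas.posSemidef, hfeas.nonneg, fun ξ => (hle ξ).trans ?_⟩
  have h := hfeas.form_le ξ
  rwa [smul_mulVec, dotProduct_smul, smul_eq_mul] at h

theorem form_le_of_isRelaxationFeasible {Q : Matrix (Fin nb ⊕ Unit) (Fin nb ⊕ Unit) ℝ}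
    {Λ : (k : Fin K) → Matrix (Fin (f k)) (Fin (f k)) ℝ} {μ : ℝ}
    (h : IsRelaxationFeasible S Q Λ μ) {T : Set (Fin K → ℝ)} (hT : IsCompact T) {s : ℝ}
    (hs : 0 ≤ s) {t : Fin K → ℝ} (ht : t ∈ T) {ξ : Fin nb ⊕ Unit → ℝ}
    (hξ : ∀ k, ((s * t k) • 1 - (∑ i, ξ (.inl i) • S k i) ^ 2).PosSemidef)
    (hξ1 : |ξ (.inr ())| ≤ 1) : ξ ⬝ᵥ Q *ᵥ ξ ≤ s * suppFn T (lamOf Λ) + μ :=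
  calc ξ ⬝ᵥ Q *ᵥ ξ
      ≤ ∑ k, (Λ k * (∑ i, ξ (.inl i) • S k i) ^ 2).trace + μ * ξ (.inr ()) ^ 2 :=
        (h.form_le ξ).trans_eq (dotProduct_relaxationMatrix_mulVec Λ μ ξ)
    _ ≤ ∑ k, s * t k * (Λ k).trace + μ * 1 := by
        gcongr with k
        · exact trace_mul_le_of_posSemidef_smul_one_sub (h.posSemidef k) (hξ k)
        · exact h.nonneg
        · exact (sq_le_one_iff_abs_le_one _).mpr hξ1
    _ = s * ∑ k, lamOf Λ k * t k + μ := by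
        simp only [lamOf, Finset.mul_sum, mul_one, mul_assoc, mul_comm (t _)]
    _ ≤ s * suppFn T (lamOf Λ) + μ := by
        gcongr
        exact le_suppFn hT _ ht

/-- The cone of pairs `(Q, r)` such that the relaxation with objective matrix `Q` has a feasible
point of value at most `r`, with `φ_𝒯` unfolded as a supremum over `T`. -/
def relaxationCone (S : (k : Fin K) → Fin nb → Matrix (Fin (f k)) (Fin (f k)) ℝ)
    (T : Set (Fin K → ℝ)) (s : ℝ) :
    PointedCone ℝ (Matrix (Fin nb ⊕ Unit) (Fin nb ⊕ Unit) ℝ × ℝ) where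
  carrier := {p | ∃ Λ μ, IsRelaxationFeasible S p.1 Λ μ ∧
    ∀ t ∈ T, s * ∑ k, lamOf Λ k * t k + μ ≤ p.2}
  add_mem' := by
    rintro p p' ⟨Λ, μ, h, hle⟩ ⟨Λ', μ', h', hle'⟩
    refine ⟨Λ + Λ', μ + μ', h.add h', fun t ht => ?_⟩
    have hsum := add_le_add (hle t ht) (hle' t ht)
    simp only [lamOf, Pi.add_apply, trace_add, add_mul, Finset.sum_add_distrib, Prod.snd_add]
      at hsum ⊢
    linarith
  zero_mem' := ⟨0, 0, .of_form_nonpos fun ξ => by simp, fun t _ => by simp [lamOf]⟩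
  smul_mem' := by
    rintro ⟨a, ha⟩ p ⟨Λ, μ, h, hle⟩
    refine ⟨a • Λ, a * μ, h.smul ha, fun t ht => ?_⟩
    have hmul := mul_le_mul_of_nonneg_left (hle t ht) ha
    simp only [lamOf, Pi.smul_apply, trace_smul, smul_eq_mul, mul_assoc, ← Finset.mul_sum]
    change _ ≤ a * p.2
    simp only [lamOf] at hmul
    linarith

end Relaxation

section DualCertificate

theorem trace_mul_sum_vecMulVec_self {m ι : Type*} [Fintype m] [Fintype ι] (M : Matrix m m ℝ)
    (x : ι → m → ℝ) :
    (M * ∑ j, vecMulVec (x j) (x j)).trace = ∑ j, x j ⬝ᵥ M *ᵥ x j := by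
  simp only [Matrix.mul_sum, trace_sum, trace_mul_vecMulVec_self]

variable {nb K : ℕ} {f : Fin K → ℕ} {S : (k : Fin K) → Fin nb → Matrix (Fin (f k)) (Fin (f k)) ℝ}
  {T : Set (Fin K → ℝ)} {Q : Matrix (Fin nb ⊕ Unit) (Fin nb ⊕ Unit) ℝ} {s c : ℝ}

theorem exists_posSemidef_forall_trace_relaxationMatrix_mul_le
    (hS : ∀ k i, (S k i).IsHermitian)
    (hnd : ∀ z : Fin nb → ℝ, (∀ k, ∑ i, z i • S k i = 0) → z = 0)
    (hne : T.Nonempty) (hcomp : IsCompact T) (hs : 0 < s)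
    (hc : ∀ Λ μ, IsRelaxationFeasible S Q Λ μ → c ≤ s * suppFn T (lamOf Λ) + μ) :
    ∃ Y : Matrix (Fin nb ⊕ Unit) (Fin nb ⊕ Unit) ℝ, Y.PosSemidef ∧ c ≤ (Q * Y).trace ∧
      ∀ (Λ : (k : Fin K) → Matrix (Fin (f k)) (Fin (f k)) ℝ) (μ : ℝ),
        (∀ k, (Λ k).PosSemidef) → 0 ≤ μ →
        (relaxationMatrix S Λ μ * Y).trace ≤ s * suppFn T (lamOf Λ) + μ := by
  have hmem : ∀ M Λ μ, IsRelaxationFeasible S M Λ μ →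
      (M, s * suppFn T (lamOf Λ) + μ) ∈ relaxationCone S T s := fun M Λ μ h =>
    ⟨Λ, μ, h, fun t ht => by
      simpa using mul_le_mul_of_nonneg_left (le_suppFn hcomp (lamOf Λ) ht) hs.le⟩
  have hvalue : ∀ r, (Q, r) ∈ relaxationCone S T s → c ≤ r := by
    rintro r ⟨Λ, μ, h, hr⟩
    have hsupp : suppFn T (lamOf Λ) ≤ (r - μ) / s := suppFn_le hne fun t ht => by
      rw [le_div_iff₀' hs]
      linarith [hr t ht]
    rw [le_div_iff₀' hs] at hsupp
    linarith [hc Λ μ h]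
  have hdom : ∀ M, ∃ r, (M, r) ∈ relaxationCone S T s := fun M =>
    have ⟨Λ, μ, h⟩ := exists_isRelaxationFeasible hS hnd M
    ⟨_, hmem M Λ μ h⟩
  obtain ⟨g, hgQ, hg⟩ := exists_linearMap_le_of_forall_le hdom hvalue
  have hg_nonneg : ∀ M, (∀ ξ, 0 ≤ ξ ⬝ᵥ M *ᵥ ξ) → 0 ≤ g M := fun M hM => by
    have hzero : (-M, (0 : ℝ)) ∈ relaxationCone S T s :=
      ⟨0, 0, .of_form_nonpos fun ξ => by simpa [neg_mulVec] using hM ξ,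
        fun t _ => by simp [lamOf]⟩
    simpa using hg _ hzero
  obtain ⟨Y, hY, hgY⟩ := exists_posSemidef_forall_eq_trace_mul hg_nonneg
  refine ⟨Y, hY, hgY Q ▸ hgQ, fun Λ μ hΛ hμ => ?_⟩
  rw [← hgY]
  exact hg _ (hmem _ Λ μ (isRelaxationFeasible_relaxationMatrix hΛ hμ))

theorem exists_orthogonal_certificate (hf : ∀ k, 1 ≤ f k) (hS : ∀ k i, (S k i).IsHermitian)
    (hnd : ∀ z : Fin nb → ℝ, (∀ k, ∑ i, z i • S k i = 0) → z = 0)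
    (hne : T.Nonempty) (hconv : Convex ℝ T) (hcomp : IsCompact T)
    (hpos : ∀ t ∈ T, ∀ k, 0 ≤ t k)
    (hmono : ∀ t t' : Fin K → ℝ, (∀ k, 0 ≤ t k) → (∀ k, t k ≤ t' k) → t' ∈ T → t ∈ T)
    (hQ : Q.IsHermitian) (hs : 0 < s)
    (hc : ∀ Λ μ, IsRelaxationFeasible S Q Λ μ → c ≤ s * suppFn T (lamOf Λ) + μ) :
    ∃ (N : ℕ) (x : Fin N → Fin nb ⊕ Unit → ℝ), ∃ t ∈ T,
      (Pairwise fun i j => x i ⬝ᵥ Q *ᵥ x j = 0) ∧ c ≤ ∑ j, x j ⬝ᵥ Q *ᵥ x j ∧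
      ∑ j, x j (.inr ()) ^ 2 ≤ 1 ∧
      ∀ k, ((s * t k) • 1 - ∑ j, (∑ i, x j (.inl i) • S k i) ^ 2).PosSemidef := by
  obtain ⟨Y, hY, hcY, hbound⟩ :=
    exists_posSemidef_forall_trace_relaxationMatrix_mul_le hS hnd hne hcomp hs hc
  obtain ⟨N, x, rfl, horth⟩ := posSemidef_exists_eq_sum_vecMulVec_pairwise hY hQ
  simp only [trace_mul_sum_vecMulVec_self, dotProduct_relaxationMatrix_mulVec] at hcY hbound
  have hweight : ∑ j, x j (.inr ()) ^ 2 ≤ 1 := by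
    have hsupp : suppFn T (lamOf (0 : (k : Fin K) → Matrix (Fin (f k)) (Fin (f k)) ℝ)) ≤ 0 :=
      suppFn_le hne fun t _ => by simp [lamOf]
    have h := hbound 0 1 (fun _ => .zero) zero_le_one
    simp only [Pi.zero_apply, Matrix.zero_mul, trace_zero, Finset.sum_const_zero, zero_add,
      one_mul] at h
    linarith [mul_nonpos_of_nonneg_of_nonpos hs.le hsupp]
  obtain ⟨t, ht, htx⟩ := exists_mem_forall_posSemidef_smul_one_sub hf hne hconv hcomp.isClosed
    hmono hpos hs (G := fun k => ∑ j, (∑ i, x j (.inl i) • S k i) ^ 2)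
    (fun k => posSemidef_sum _ fun j _ =>
      isHermitian_posSemidef_pow_of_even (isHermitian_sum_smul (hS k) _) even_two)
    fun Λ hΛ => by
      have h := hbound Λ 0 hΛ le_rfl
      simp only [zero_mul, add_zero] at h
      rw [Finset.sum_comm] at h
      simpa only [Matrix.mul_sum, trace_sum] using h
  exact ⟨N, x, t, ht, horth, hcY, hweight, htx⟩

theorem exists_le_form_of_forall_isRelaxationFeasible (hf : ∀ k, 1 ≤ f k)
    (hS : ∀ k i, (S k i).IsHermitian)
    (hnd : ∀ z : Fin nb → ℝ, (∀ k, ∑ i, z i • S k i = 0) → z = 0)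
    (hne : T.Nonempty) (hconv : Convex ℝ T) (hcomp : IsCompact T)
    (hpos : ∀ t ∈ T, ∀ k, 0 ≤ t k)
    (hmono : ∀ t t' : Fin K → ℝ, (∀ k, 0 ≤ t k) → (∀ k, t k ≤ t' k) → t' ∈ T → t ∈ T)
    (hQ : Q.IsHermitian) (hs : 0 < s)
    (hc : ∀ Λ μ, IsRelaxationFeasible S Q Λ μ → c ≤ s * suppFn T (lamOf Λ) + μ) :
    ∃ ξ : Fin nb ⊕ Unit → ℝ, c ≤ ξ ⬝ᵥ Q *ᵥ ξ ∧ |ξ (.inr ())| ≤ 1 ∧ ∃ t ∈ T, ∀ k,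
      ((2 * Real.log (8 * ∑ k, (f k : ℝ)) * s * t k) • 1
        - (∑ i, ξ (.inl i) • S k i) ^ 2).PosSemidef := by
  obtain ⟨N, x, t, ht, horth, hcx, hweight, htx⟩ :=
    exists_orthogonal_certificate hf hS hnd hne hconv hcomp hpos hmono hQ hs hc
  obtain ⟨ε, hw, hz⟩ := exists_abs_signedSum_le_one_forall_posSemidef hweight
    (fun k j => isHermitian_sum_smul (hS k) fun i => x j (.inl i))
    (fun k => mul_nonneg hs.le (hpos t ht k)) htx
  refine ⟨signedSum x ε, hcx.trans_eq (dotProduct_mulVec_signedSum horth ε).symm, ?_,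
    t, ht, fun k => ?_⟩
  · exact (congrArg _ (map_signedSum (LinearMap.proj (R := ℝ) (Sum.inr ())) x ε)).trans_le hw
  · have hmap := map_signedSum
      (Fintype.linearCombination ℝ (S k) ∘ₗ LinearMap.funLeft ℝ ℝ Sum.inl) x ε
    simp only [LinearMap.comp_apply, Fintype.linearCombination_apply,
      LinearMap.funLeft_apply] at hmap
    rw [hmap]
    simpa only [Fintype.card_fin, mul_assoc] using hz k

end DualCertificate

section Spectratope

theorem qPlus_transpose_mul_mul_isSymm {n m : ℕ} (P : Matrix (Fin n) (Fin m) ℝ)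
    {A : Matrix (Fin n) (Fin n) ℝ} (hA : A.IsSymm) (q : Fin m → ℝ) :
    (qPlus (Pᵀ * A * P) q).IsSymm :=
  IsSymm.fromBlocks (isHermitian_conjTranspose_mul_mul P hA) rfl transpose_zero

theorem elim_dotProduct_qPlus_mulVec {n m : ℕ} (P : Matrix (Fin n) (Fin m) ℝ)
    (A : Matrix (Fin n) (Fin n) ℝ) (b : Fin n → ℝ) (z : Fin m → ℝ) (w : ℝ) :
    Sum.elim z (fun _ => w) ⬝ᵥ qPlus (Pᵀ * A * P) (Pᵀ *ᵥ b) *ᵥ Sum.elim z (fun _ => w)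
      = (P *ᵥ z) ⬝ᵥ A *ᵥ (P *ᵥ z) + 2 * w * (b ⬝ᵥ P *ᵥ z) := by
  have htranspose : ∀ y, z ⬝ᵥ Pᵀ *ᵥ y = (P *ᵥ z) ⬝ᵥ y := fun y => by
    rw [dotProduct_mulVec, vecMul_transpose]
  have hquad : z ⬝ᵥ (Pᵀ * A * P) *ᵥ z = (P *ᵥ z) ⬝ᵥ A *ᵥ (P *ᵥ z) := by
    rw [← mulVec_mulVec, ← mulVec_mulVec, htranspose]
  have hcol : (of fun i (_ : Unit) => (Pᵀ *ᵥ b) i) *ᵥ (fun _ => w) = w • (Pᵀ *ᵥ b) := by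
    ext i
    simp [mulVec, dotProduct, mul_comm]
  have hrow : (fun _ : Unit => w) ⬝ᵥ (of fun (_ : Unit) j => (Pᵀ *ᵥ b) j) *ᵥ z
      = w * (z ⬝ᵥ Pᵀ *ᵥ b) := by
    simp only [dotProduct, mulVec, of_apply, Fintype.sum_unique, mul_comm (z _)]
  rw [qPlus, fromBlocks_mulVec, sumElim_dotProduct_sumElim, Sum.elim_comp_inl, Sum.elim_comp_inr,
    zero_mulVec, add_zero, dotProduct_add, hquad, hcol, hrow, dotProduct_smul, htranspose,
    smul_eq_mul, dotProduct_comm b]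
  ring

variable {n nb K : ℕ} {f : Fin K → ℕ} {P : Matrix (Fin n) (Fin nb) ℝ}
  {S : (k : Fin K) → Fin nb → Matrix (Fin (f k)) (Fin (f k)) ℝ}
  {T : Set (Fin K → ℝ)} {A : Matrix (Fin n) (Fin n) ℝ} {b : Fin n → ℝ} {s : ℝ}

theorem neg_mem_spectratope {x : Fin n → ℝ} (hx : x ∈ spectratope f P S T s) :
    -x ∈ spectratope f P S T s := by
  obtain ⟨z, t, ht, rfl, hz⟩ := hx
  refine ⟨-z, t, ht, (mulVec_neg _ _).symm, fun k => ?_⟩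
  simpa only [Pi.neg_apply, neg_smul, Finset.sum_neg_distrib, neg_sq] using hz k

theorem bddAbove_quadratic_spectratope {Λ : (k : Fin K) → Matrix (Fin (f k)) (Fin (f k)) ℝ} {μ : ℝ}
    (hT : IsCompact T) (hs : 0 ≤ s)
    (h : IsRelaxationFeasible S (qPlus (Pᵀ * A * P) (Pᵀ *ᵥ b)) Λ μ) :
    BddAbove {v : ℝ | ∃ x ∈ spectratope f P S T s, v = x ⬝ᵥ A *ᵥ x + 2 * (b ⬝ᵥ x)} := by
  refine ⟨s * suppFn T (lamOf Λ) + μ, ?_⟩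
  rintro _ ⟨_, ⟨z, t, ht, rfl, hz⟩, rfl⟩
  have hle := form_le_of_isRelaxationFeasible h hT hs ht (ξ := Sum.elim z fun _ => 1) hz (by simp)
  rwa [elim_dotProduct_qPlus_mulVec, mul_one] at hle

theorem quadratic_le_sSup_spectratope
    (hbdd : BddAbove {v : ℝ | ∃ x ∈ spectratope f P S T s, v = x ⬝ᵥ A *ᵥ x + 2 * (b ⬝ᵥ x)})
    {x : Fin n → ℝ} (hx : x ∈ spectratope f P S T s) {w : ℝ} (hw : |w| ≤ 1) :
    x ⬝ᵥ A *ᵥ x + 2 * w * (b ⬝ᵥ x)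
      ≤ sSup {v : ℝ | ∃ x ∈ spectratope f P S T s, v = x ⬝ᵥ A *ᵥ x + 2 * (b ⬝ᵥ x)} := by
  have hplus := le_csSup hbdd ⟨x, hx, rfl⟩
  have hminus := le_csSup hbdd ⟨-x, neg_mem_spectratope hx, rfl⟩
  rw [mulVec_neg, neg_dotProduct_neg, dotProduct_neg] at hminus
  have hwb : w * (b ⬝ᵥ x) ≤ |b ⬝ᵥ x| := by
    refine (le_abs_self _).trans ?_
    rw [abs_mul]
    exact mul_le_of_le_one_left (abs_nonneg _) hw
  rcases abs_cases (b ⬝ᵥ x) with ⟨h, -⟩ | ⟨h, -⟩ <;> linarith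

theorem le_sSup_spectratope_of_forall_isRelaxationFeasible (hf : ∀ k, 1 ≤ f k)
    (hS : ∀ k i, (S k i).IsSymm)
    (hnd : ∀ z : Fin nb → ℝ, (∀ k, ∑ i, z i • S k i = 0) → z = 0)
    (hne : T.Nonempty) (hconv : Convex ℝ T) (hcomp : IsCompact T)
    (hpos : ∀ t ∈ T, ∀ k, 0 ≤ t k)
    (hmono : ∀ t t' : Fin K → ℝ, (∀ k, 0 ≤ t k) → (∀ k, t k ≤ t' k) → t' ∈ T → t ∈ T)
    (hA : A.IsSymm) (hs : 0 < s) {c : ℝ}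
    (hc : ∀ Λ μ, IsRelaxationFeasible S (qPlus (Pᵀ * A * P) (Pᵀ *ᵥ b)) Λ μ →
      c ≤ s * suppFn T (lamOf Λ) + μ) :
    c ≤ sSup {v : ℝ | ∃ x ∈ spectratope f P S T (2 * Real.log (8 * ∑ k, (f k : ℝ)) * s),
      v = x ⬝ᵥ A *ᵥ x + 2 * (b ⬝ᵥ x)} := by
  have hκ : 0 ≤ 2 * Real.log (8 * ∑ k, (f k : ℝ)) * s :=
    mul_nonneg (mul_nonneg zero_le_two (log_eight_mul_sum_natCast_nonneg f)) hs.le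
  have hQ : (qPlus (Pᵀ * A * P) (Pᵀ *ᵥ b)).IsHermitian := qPlus_transpose_mul_mul_isSymm P hA _
  obtain ⟨ξ, hξ, hw, t, ht, hz⟩ :=
    exists_le_form_of_forall_isRelaxationFeasible hf hS hnd hne hconv hcomp hpos hmono hQ hs hc
  obtain ⟨z, w, rfl⟩ : ∃ z w, Sum.elim z (fun _ => w) = ξ :=
    ⟨ξ ∘ .inl, ξ (.inr ()), Sum.elim_comp_inl_inr ξ⟩
  obtain ⟨Λ, μ, hfeas⟩ := exists_isRelaxationFeasible hS hnd (qPlus (Pᵀ * A * P) (Pᵀ *ᵥ b))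
  rw [elim_dotProduct_qPlus_mulVec] at hξ
  exact hξ.trans <| quadratic_le_sSup_spectratope
    (bddAbove_quadratic_spectratope hcomp hκ hfeas) ⟨z, t, ht, rfl, hz⟩ hw

end Spectratope

theorem stmt3 {n nb K : ℕ} (hK : 1 ≤ K)
    (P : Matrix (Fin n) (Fin nb) ℝ)
    (f : Fin K → ℕ) (hf : ∀ k, 1 ≤ f k)
    (Smat : (k : Fin K) → Fin nb → Matrix (Fin (f k)) (Fin (f k)) ℝ)
    (hSm : ∀ k i, (Smat k i).IsSymm)
    (hnd : ∀ z : Fin nb → ℝ, (∀ k, (∑ i, z i • Smat k i) = 0) → z = 0)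
    (T : Set (Fin K → ℝ))
    (hTne : T.Nonempty) (hTconv : Convex ℝ T) (hTcomp : IsCompact T)
    (hTnonneg : ∀ t ∈ T, ∀ k, 0 ≤ t k)
    (hTmono : ∀ t t' : Fin K → ℝ, (∀ k, 0 ≤ t k) → (∀ k, t k ≤ t' k) → t' ∈ T → t ∈ T)
    (hTpos : ∃ t ∈ T, ∀ k, 0 < t k)
    (A : Matrix (Fin n) (Fin n) ℝ) (hA : A.IsSymm) (b : Fin n → ℝ)
    (s : ℝ) (hs : 0 < s) :
    sInf {v : ℝ | ∃ Λ : (k : Fin K) → Matrix (Fin (f k)) (Fin (f k)) ℝ, ∃ μ : ℝ,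
        (∀ k, (Λ k).PosSemidef) ∧ 0 ≤ μ ∧
        (blockDiagOne (∑ k, calSstar (Smat k) (Λ k)) μ
          - qPlus (Pᵀ * A * P) (Pᵀ *ᵥ b)).PosSemidef ∧
        v = s * suppFn T (lamOf Λ) + μ} ≤
      sSup {v : ℝ | ∃ x ∈ spectratope f P Smat T (2 * Real.log (8 * (∑ k, (f k : ℝ))) * s),
        v = x ⬝ᵥ A *ᵥ x + 2 * (b ⬝ᵥ x)} := by
  refine le_sSup_spectratope_of_forall_isRelaxationFeasible hf hSm hnd hTne hTconv hTcomp hTnonneg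
    hTmono hA hs fun Λ μ hfeas => ?_
  obtain ⟨hΛ, hμ, hle⟩ := (isRelaxationFeasible_iff_posSemidef_sub
    (qPlus_transpose_mul_mul_isSymm P hA _)).mp hfeas
  refine csInf_le ⟨0, ?_⟩ ⟨Λ, μ, hΛ, hμ, hle, rfl⟩
  rintro _ ⟨Λ', μ', hΛ', hμ', -, rfl⟩
  exact add_nonneg (mul_nonneg hs.le (suppFn_nonneg hTnonneg fun k => (hΛ' k).trace_nonneg)) hμ'
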